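/- arXiv:math/0303043 — 3 statements merged into one kernel-verified Lean document; each statement's English description precedes it below -/
import Mathlib

section
/- For every prime p ≥ 7, the multiple harmonic sum H(1,2,1;2p-1) = Σ_{1 ≤ k₁ < k₂ < k₃ ≤ 2p-1} 1/(k₁·k₂²·k₃) satisfies v_p(H(1,2,1;2p-1)) ≥ 1; that is, p divides the numerator of H(1,2,1;2p-1). -/
open Classical in
/-- Multiple harmonic sum `H(s₁,…,s_l; n) = ∑_{1 ≤ k₁ < ⋯ < k_l ≤ n} k₁^{-s₁} ⋯ k_l^{-s_l}`,
encoded via strictly increasing tuples of indices in `{1,…,n}` (an empty sum is `0`,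
and `mhs [] n = 1`). -/
noncomputable def mhs (s : List ℕ) (n : ℕ) : ℚ :=
  ∑ k ∈ Finset.univ.filter
      (fun k : Fin s.length → Fin (n + 1) =>
        StrictMono k ∧ ∀ i, 1 ≤ (k i : ℕ)),
    ∏ i, 1 / (((k i : ℕ) : ℚ) ^ s.get i)

open Classical in
/-- `p`-restricted multiple harmonic sum `H*(s; n)`: same sum with all indices
not divisible by `p`. -/
noncomputable def mhsStar (p : ℕ) (s : List ℕ) (n : ℕ) : ℚ :=
  ∑ k ∈ Finset.univ.filter
      (fun k : Fin s.length → Fin (n + 1) =>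
        StrictMono k ∧ ∀ i, 1 ≤ (k i : ℕ) ∧ ¬ p ∣ (k i : ℕ)),
    ∏ i, 1 / (((k i : ℕ) : ℚ) ^ s.get i)

namespace MHSaux

def D (p : ℕ) (n : ℤ) (x : ℚ) : Prop := padicNorm p x ≤ (p : ℚ) ^ (-n)

def hh (w : ℕ → ℚ) (a n : ℕ) : ℚ := ∑ k ∈ Finset.range n, w k ^ a
def gg (w : ℕ → ℚ) (a b n : ℕ) : ℚ := ∑ k ∈ Finset.range n, hh w a k * w k ^ b
def tt (w : ℕ → ℚ) (a b c n : ℕ) : ℚ := ∑ k ∈ Finset.range n, gg w a b k * w k ^ c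

def w0 (k : ℕ) : ℚ := (k : ℚ)⁻¹
def w1 (p k : ℕ) : ℚ := if k = 0 then 0 else ((p : ℚ) + k)⁻¹

@[simp] lemma w0_zero : w0 0 = 0 := by simp [w0]

section ring
variable (w : ℕ → ℚ) (a b c n : ℕ)
@[simp] lemma hh_zero : hh w a 0 = 0 := by simp [hh]
@[simp] lemma gg_zero : gg w a b 0 = 0 := by simp [gg]
@[simp] lemma tt_zero : tt w a b c 0 = 0 := by simp [tt]
lemma hh_succ : hh w a (n+1) = hh w a n + w n ^ a := by simp [hh, Finset.sum_range_succ]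
lemma gg_succ : gg w a b (n+1) = gg w a b n + hh w a n * w n ^ b := by
  simp [gg, Finset.sum_range_succ]
lemma tt_succ : tt w a b c (n+1) = tt w a b c n + gg w a b n * w n ^ c := by
  simp [tt, Finset.sum_range_succ]

lemma stuffle2 : hh w a n * hh w b n = gg w a b n + gg w b a n + hh w (a+b) n := by
  induction n with
  | zero => simp
  | succ n ih => simp only [hh_succ, gg_succ, pow_add]; linear_combination ih

lemma stuffle3 : hh w 1 n * gg w 1 2 n
    = 2 * tt w 1 1 2 n + tt w 1 2 1 n + gg w 2 2 n + gg w 1 3 n := by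
  induction n with
  | zero => simp
  | succ n ih =>
    have h := stuffle2 w 1 1 n
    simp only [hh_succ, gg_succ, tt_succ]
    norm_num at h
    linear_combination ih + w n ^ 2 * h
end ring

lemma w0_pf {k s : ℕ} (hk : 0 < k) (hks : k < s) :
    w0 k * w0 (s - k) = w0 s * (w0 k + w0 (s - k)) := by
  have h1 : (k : ℚ) ≠ 0 := by positivity
  have h2 : ((s - k : ℕ) : ℚ) ≠ 0 := by
    have : 0 < s - k := by omega
    positivity
  have h3 : (s : ℚ) = k + (s - k : ℕ) := by
    rw [Nat.cast_sub hks.le]; ring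
  have h4 : (k : ℚ) + (s - k : ℕ) ≠ 0 := by positivity
  simp only [w0]
  rw [h3]
  field_simp
  ring

lemma conv_one (s : ℕ) : ∑ j ∈ Finset.range s, w0 j * w0 (s - j) = 2 * hh w0 1 s * w0 s := by
  have h1 : ∀ j ∈ Finset.range s, w0 j * w0 (s - j)
      = w0 s * (w0 j + (if j = 0 then 0 else w0 (s - j))) := by
    intro j hj
    rw [Finset.mem_range] at hj
    rcases Nat.eq_zero_or_pos j with rfl | h
    · simp
    · rw [w0_pf h hj, if_neg (by omega)]
  rw [Finset.sum_congr rfl h1, ← Finset.mul_sum, Finset.sum_add_distrib]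
  have h2 : ∑ j ∈ Finset.range s, (if j = 0 then 0 else w0 (s - j)) = hh w0 1 s := by
    rcases s with _ | q
    · simp
    · rw [Finset.sum_range_succ']
      simp only [hh, pow_one]
      rw [Finset.sum_range_succ' w0, ← Finset.sum_range_reflect]
      simp only [w0_zero, if_true, add_zero]
      apply Finset.sum_congr rfl
      intro j hj
      rw [Finset.mem_range] at hj
      rw [if_neg (by omega)]
      congr 1
      omega
  rw [h2]
  simp [hh]
  ring

lemma conv_h (s : ℕ) : ∑ k ∈ Finset.range s, hh w0 1 k * w0 (s - k) = 2 * gg w0 1 1 s := by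
  have key : ∀ s, ∑ k ∈ Finset.range (s+1), hh w0 1 (s - k) * w0 k = 2 * gg w0 1 1 s := by
    intro s
    induction s with
    | zero => simp
    | succ s ih =>
      rw [Finset.sum_range_succ, Nat.sub_self, hh_zero, zero_mul, add_zero]
      have : ∀ k ∈ Finset.range (s+1), hh w0 1 (s + 1 - k) * w0 k
          = hh w0 1 (s - k) * w0 k + w0 k * w0 (s - k) := by
        intro k hk
        rw [Finset.mem_range] at hk
        rw [show s + 1 - k = (s - k) + 1 by omega, hh_succ]; ring
      rw [Finset.sum_congr rfl this, Finset.sum_add_distrib, ih, Finset.sum_range_succ, conv_one,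
        gg_succ]
      simp
      ring
  rw [← key]
  have h := Finset.sum_flip (n := s) (fun k => hh w0 1 k * w0 (s - k))
  rw [Finset.sum_range_succ (fun k => hh w0 1 k * w0 (s - k))] at h
  simp only [Nat.sub_self, w0_zero, mul_zero, add_zero] at h
  rw [← h]
  apply Finset.sum_congr rfl
  intro j hj
  rw [Finset.mem_range] at hj
  rw [show s - (s - j) = j by omega]

lemma conv_inner (s : ℕ) : ∑ k ∈ Finset.range s, hh w0 1 k * w0 k ^ 2 * w0 (s - k)
    = gg w0 1 2 s * w0 s + 3 * (gg w0 1 1 s * w0 s ^ 2) := by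
  have h1 : ∀ k ∈ Finset.range s, hh w0 1 k * w0 k ^ 2 * w0 (s - k)
      = hh w0 1 k * w0 k ^ 2 * w0 s + hh w0 1 k * w0 k ^ 1 * w0 s ^ 2
        + hh w0 1 k * w0 (s - k) * w0 s ^ 2 := by
    intro k hk
    rw [Finset.mem_range] at hk
    rcases Nat.eq_zero_or_pos k with rfl | h
    · simp
    · linear_combination (hh w0 1 k * w0 k + hh w0 1 k * w0 s) * w0_pf h hk
  rw [Finset.sum_congr rfl h1, Finset.sum_add_distrib, Finset.sum_add_distrib,
    ← Finset.sum_mul, ← Finset.sum_mul, ← Finset.sum_mul, conv_h]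
  simp only [gg]
  ring

lemma conv_outer (p : ℕ) : ∑ m ∈ Finset.range p, gg w0 1 2 (p - m) * w0 m
    = tt w0 1 2 1 p + 3 * tt w0 1 1 2 p := by
  have h := Finset.sum_range_diag_flip p (fun m k => hh w0 1 k * w0 k ^ 2 * w0 m)
  simp only [gg, Finset.sum_mul]
  rw [← h]
  simp only [tt, Finset.mul_sum, ← Finset.sum_add_distrib]
  apply Finset.sum_congr rfl
  intro s _
  rw [pow_one, ← conv_inner]
  have h2 := Finset.sum_flip (n := s) (fun k => hh w0 1 k * w0 k ^ 2 * w0 (s - k))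
  rw [Finset.sum_range_succ (fun k => hh w0 1 k * w0 k ^ 2 * w0 (s - k))] at h2
  simp only [Nat.sub_self, w0_zero, mul_zero, add_zero] at h2
  rw [← h2]
  apply Finset.sum_congr rfl
  intro j hj
  rw [Finset.mem_range] at hj
  rw [show s - (s - j) = j by omega]

/-- Splitting at `p`. -/
lemma split_h {p : ℕ} (n : ℕ) :
    hh w0 1 (p + (n + 1)) = hh w0 1 p + (p:ℚ)⁻¹ + hh (w1 p) 1 (n + 1) := by
  induction n with
  | zero => simp [hh_succ, w1, w0]
  | succ n ih =>
    rw [← add_assoc p, hh_succ, ih, hh_succ _ _ (n+1)]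
    simp [w0, w1]; ring

lemma split_g {p : ℕ} (n : ℕ) :
    gg w0 1 2 (p + (n + 1)) = gg w0 1 2 p + hh w0 1 p * (p:ℚ)⁻¹ ^ 2
      + (hh w0 1 p + (p:ℚ)⁻¹) * hh (w1 p) 2 (n + 1) + gg (w1 p) 1 2 (n + 1) := by
  induction n with
  | zero => simp [hh_succ, gg_succ, w1, w0]
  | succ n ih =>
    rw [← add_assoc p, gg_succ, ih, hh_succ _ _ (n+1), gg_succ _ _ _ (n+1), split_h]
    simp [w0, w1]; ring

lemma split_t {p : ℕ} (n : ℕ) :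
    tt w0 1 2 1 (p + (n + 1)) = tt w0 1 2 1 p + gg w0 1 2 p * (p:ℚ)⁻¹
      + (gg w0 1 2 p + hh w0 1 p * (p:ℚ)⁻¹ ^ 2) * hh (w1 p) 1 (n + 1)
      + (hh w0 1 p + (p:ℚ)⁻¹) * gg (w1 p) 2 1 (n + 1) + tt (w1 p) 1 2 1 (n + 1) := by
  induction n with
  | zero => simp [hh_succ, gg_succ, tt_succ, w1, w0]
  | succ n ih =>
    rw [← add_assoc p, tt_succ, ih, hh_succ _ _ (n+1), gg_succ _ _ _ (n+1), tt_succ _ _ _ _ (n+1),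
      split_g]
    simp [w0, w1]; ring

lemma sum_Ico_one {p : ℕ} (f : ℕ → ℚ) (h : f 0 = 0) :
    ∑ k ∈ Finset.range p, f k = ∑ k ∈ Finset.Ico 1 p, f k := by
  rcases p with _ | q
  · simp
  · rw [Finset.range_eq_Ico, Finset.sum_eq_sum_Ico_succ_bot (by omega), h, zero_add]

lemma sum_refl {p : ℕ} (f : ℕ → ℚ) (h : f 0 = 0) :
    ∑ k ∈ Finset.range p, f k = ∑ k ∈ Finset.Ico 1 p, f (p - k) := by
  rw [sum_Ico_one f h, Finset.sum_Ico_reflect _ _ (by omega)]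
  simp

section padic
variable {p : ℕ} [hp : Fact p.Prime]

lemma D.add {n : ℤ} {x y : ℚ} (hx : D p n x) (hy : D p n y) : D p n (x + y) :=
  padicNorm.nonarchimedean.trans (max_le hx hy)
lemma D.neg {n : ℤ} {x : ℚ} (hx : D p n x) : D p n (-x) := by
  unfold D; rw [padicNorm.neg]; exact hx
lemma D.sub {n : ℤ} {x y : ℚ} (hx : D p n x) (hy : D p n y) : D p n (x - y) := by
  rw [sub_eq_add_neg]; exact hx.add hy.neg
lemma D.mono {m n : ℤ} {x : ℚ} (hx : D p m x) (h : n ≤ m) : D p n x := by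
  refine le_trans hx ?_
  exact zpow_le_zpow_right₀ (by exact_mod_cast hp.out.one_lt.le) (by omega)
lemma D.mul {k m n : ℤ} {x y : ℚ} (hx : D p m x) (hy : D p n y) (h : k ≤ m + n) :
    D p k (x * y) := by
  refine D.mono (m := m + n) ?_ h
  unfold D at *
  rw [padicNorm.mul, neg_add, zpow_add₀ (by exact_mod_cast hp.out.ne_zero)]
  exact mul_le_mul hx hy (padicNorm.nonneg _) (by positivity)
lemma D.sum {ι : Type*} {s : Finset ι} {n : ℤ} {f : ι → ℚ} (h : ∀ i ∈ s, D p n (f i)) :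
    D p n (∑ i ∈ s, f i) := padicNorm.sum_le' h (by positivity)
lemma D.int (z : ℤ) : D p 0 (z : ℚ) := by simpa [D] using padicNorm.of_int z
lemma D.nat (z : ℕ) : D p 0 (z : ℚ) := by simpa [D] using padicNorm.of_nat z
lemma D.pow {x : ℚ} (h : D p 0 x) (a : ℕ) : D p 0 (x ^ a) := by
  induction a with
  | zero => simpa using D.nat (p := p) 1
  | succ a ih => rw [pow_succ]; exact ih.mul h (by norm_num)
lemma D.pp : D p 1 (p : ℚ) := by
  unfold D; rw [padicNorm.padicNorm_p hp.out.one_lt]; simp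
lemma D.pinv : D p (-1) ((p : ℚ)⁻¹) := by
  have h := padicNorm.padicNorm_p hp.out.one_lt
  have h0 : (p : ℚ) ≠ 0 := by exact_mod_cast hp.out.ne_zero
  have h2 := padicNorm.mul (p := p) (p:ℚ) (p:ℚ)⁻¹
  rw [mul_inv_cancel₀ h0, h, padicNorm.one] at h2
  unfold D
  have h3 : padicNorm p ((p:ℚ)⁻¹) = p := by
    calc padicNorm p ((p:ℚ)⁻¹) = p * ((p:ℚ)⁻¹ * padicNorm p ((p:ℚ)⁻¹)) := by
          rw [← mul_assoc, mul_inv_cancel₀ h0, one_mul]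
      _ = p := by rw [← h2, mul_one]
  rw [h3]; simp
lemma D.inv {m : ℕ} (h : ¬ p ∣ m) : D p 0 ((m : ℚ)⁻¹) := by
  have h1 := (padicNorm.nat_eq_one_iff (p := p) m).2 h
  have h0 : (m : ℚ) ≠ 0 := by
    rintro h0
    have : m = 0 := by exact_mod_cast h0
    subst this; simp at h
  have h2 := padicNorm.mul (p := p) (m:ℚ) (m:ℚ)⁻¹
  rw [mul_inv_cancel₀ h0, h1, padicNorm.one, one_mul] at h2
  unfold D
  rw [← h2]; simp
lemma D.half {n : ℤ} {x : ℚ} (hp3 : 3 ≤ p) (h : D p n (2 * x)) : D p n x := by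
  have h2 : D p 0 (((2:ℕ) : ℚ)⁻¹) := D.inv (fun h => by have := Nat.le_of_dvd (by norm_num) h; omega)
  have := h2.mul h (k := n) (by omega)
  convert this using 1
  push_cast; ring
lemma D.num {x : ℚ} (h : D p 1 x) : (p : ℤ) ∣ x.num := by
  have h1 : D p 1 (x.num : ℚ) := by
    have := h.mul (D.nat x.den) (k := 1) (by norm_num)
    rwa [Rat.mul_den_eq_num] at this
  have := (padicNorm.dvd_iff_norm_le (p := p) (n := 1) (z := x.num)).2 (by simpa [D] using h1)
  simpa using this
lemma D.of_dvd {z : ℤ} (h : (p:ℤ) ∣ z) : D p 1 (z : ℚ) := by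
  obtain ⟨y, rfl⟩ := h
  push_cast
  exact D.pp.mul (D.int y) (by norm_num)

lemma D_w0 {k : ℕ} (hk : k < p) : D p 0 (w0 k) := by
  rcases Nat.eq_zero_or_pos k with rfl | h
  · simpa using D.nat (p := p) 0
  · exact D.inv (Nat.not_dvd_of_pos_of_lt h hk)
lemma D_w1 {k : ℕ} (hk : k < p) : D p 0 (w1 p k) := by
  unfold w1
  split_ifs with h0
  · simpa using D.nat (p := p) 0
  · have : ¬ p ∣ p + k := by
      rw [Nat.dvd_add_right (dvd_refl p)]
      exact Nat.not_dvd_of_pos_of_lt (by omega) hk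
    simpa using D.inv this

section gen
lemma D_hh {w : ℕ → ℚ} (hw : ∀ k < p, D p 0 (w k)) {n : ℕ} (a : ℕ) (hn : n ≤ p) : D p 0 (hh w a n) :=
  D.sum fun i hi => (hw i (by simp at hi; omega)).pow a
lemma D_gg {w : ℕ → ℚ} (hw : ∀ k < p, D p 0 (w k)) {n : ℕ} (a b : ℕ) (hn : n ≤ p) : D p 0 (gg w a b n) :=
  D.sum fun i hi => by
    rw [Finset.mem_range] at hi
    exact (D_hh hw a (by omega)).mul ((hw i (by omega)).pow b) (by norm_num)
end gen

/-- Power sums. -/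
lemma D_pow {s : ℕ} (hs : 1 ≤ s) (hsp : s < p - 1) : D p 1 (hh w0 s p) := by
  have h1 : D p 1 (hh w0 s p - ∑ k ∈ Finset.range p, (k:ℚ) ^ (p - 1 - s)) := by
    unfold hh
    rw [← Finset.sum_sub_distrib]
    refine D.sum fun k hk => ?_
    rw [Finset.mem_range] at hk
    rcases Nat.eq_zero_or_pos k with rfl | h
    · rw [w0_zero, Nat.cast_zero, zero_pow (by omega), zero_pow (by omega)]
      simp [D]
    · have h2 : (p:ℤ) ∣ (k:ℤ) ^ (p - 1) - 1 := by
        rw [← ZMod.intCast_zmod_eq_zero_iff_dvd _ p]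
        have hk0 : (k : ZMod p) ≠ 0 := by
          rw [Ne, ZMod.natCast_eq_zero_iff]
          exact Nat.not_dvd_of_pos_of_lt h hk
        push_cast
        rw [ZMod.pow_card_sub_one_eq_one hk0, sub_self]
      have h3 := ((D.of_dvd h2).mul ((D_w0 hk).pow s) (k := 1) (by norm_num)).neg
      convert h3 using 1
      have hk0 : (k:ℚ) ≠ 0 := by positivity
      have h4 : (k:ℚ) ^ (p - 1) = k ^ (p - 1 - s) * k ^ s := by
        rw [← pow_add]; congr 1; omega
      push_cast
      rw [h4]
      have h5 : (k:ℚ) ^ s * w0 k ^ s = 1 := by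
        rw [← mul_pow]; unfold w0; rw [mul_inv_cancel₀ hk0, one_pow]
      linear_combination (k:ℚ) ^ (p - 1 - s) * h5
  have h2 : D p 1 (∑ k ∈ Finset.range p, (k:ℚ) ^ (p - 1 - s)) := by
    have h3 : (p:ℤ) ∣ ∑ k ∈ Finset.range p, (k:ℤ) ^ (p - 1 - s) := by
      rw [← ZMod.intCast_zmod_eq_zero_iff_dvd _ p]
      have h4 := FiniteField.sum_pow_lt_card_sub_one (ZMod p) (p - 1 - s) (by rw [ZMod.card]; omega)
      push_cast
      rw [← h4]
      refine Finset.sum_bij' (fun k _ => (k : ZMod p)) (fun x _ => x.val) ?_ ?_ ?_ ?_ ?_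
      · simp
      · intro a _; simpa using ZMod.val_lt a
      · intro a ha; simpa using ZMod.val_cast_of_lt (by simpa using ha)
      · intro a _; simp
      · simp
    have := D.of_dvd h3
    push_cast at this
    exact this
  simpa using h1.add h2

lemma refl_w {k : ℕ} (h1 : 1 ≤ k) (h2 : k < p) : w0 k + w0 (p - k) = p * (w0 k * w0 (p - k)) := by
  rw [w0_pf h1 h2]
  have h0 : (p : ℚ) ≠ 0 := by exact_mod_cast hp.out.ne_zero
  unfold w0; field_simp

lemma D_refl {k : ℕ} (h1 : 1 ≤ k) (h2 : k < p) : D p 1 (w0 k + w0 (p - k)) := by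
  rw [refl_w h1 h2]
  exact D.pp.mul ((D_w0 h2).mul (D_w0 (by omega)) (k := 0) (by norm_num)) (by norm_num)

lemma D_h1 (h7 : 7 ≤ p) : D p 2 (hh w0 1 p) := by
  apply D.half (by omega)
  have e : 2 * hh w0 1 p = ∑ k ∈ Finset.Ico 1 p, (p * w0 k * (w0 k + w0 (p - k))) - p * hh w0 2 p := by
    have e1 : hh w0 1 p = ∑ k ∈ Finset.Ico 1 p, w0 k := by
      unfold hh; rw [sum_Ico_one _ (by simp)]; simp
    have e2 : hh w0 1 p = ∑ k ∈ Finset.Ico 1 p, w0 (p - k) := by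
      unfold hh; rw [sum_refl _ (by simp)]; simp
    rw [two_mul]; nth_rw 1 [e1]; rw [e2]
    unfold hh
    rw [sum_Ico_one _ (by simp), Finset.mul_sum, ← Finset.sum_add_distrib, ← Finset.sum_sub_distrib]
    refine Finset.sum_congr rfl fun k hk => ?_
    rw [Finset.mem_Ico] at hk
    linear_combination refl_w hk.1 hk.2
  rw [e]
  refine D.sub (D.sum fun k hk => ?_) (D.pp.mul (D_pow (by norm_num) (by omega)) (by norm_num))
  rw [Finset.mem_Ico] at hk
  exact (D.pp.mul (D_w0 hk.2) (k := 1) (by norm_num)).mul (D_refl hk.1 hk.2) (by norm_num)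

lemma D_h3 (h7 : 7 ≤ p) : D p 2 (hh w0 3 p) := by
  apply D.half (by omega)
  have e : 2 * hh w0 3 p = ∑ k ∈ Finset.Ico 1 p, ((w0 k + w0 (p - k)) * (w0 k + w0 (p - k)) *
        (w0 k + w0 (p - k) - (3:ℕ) * w0 k) + (3:ℕ) * (p * w0 k ^ 3 * (w0 k + w0 (p - k))))
       - (3:ℕ) * (p * hh w0 4 p) := by
    have e1 : hh w0 3 p = ∑ k ∈ Finset.Ico 1 p, w0 k ^ 3 := by
      unfold hh; rw [sum_Ico_one _ (by simp)]
    have e2 : hh w0 3 p = ∑ k ∈ Finset.Ico 1 p, w0 (p - k) ^ 3 := by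
      unfold hh; rw [sum_refl _ (by simp)]
    rw [two_mul]; nth_rw 1 [e1]; rw [e2]
    unfold hh
    rw [sum_Ico_one _ (by simp), Finset.mul_sum, Finset.mul_sum, ← Finset.sum_add_distrib,
      ← Finset.sum_sub_distrib]
    refine Finset.sum_congr rfl fun k hk => ?_
    rw [Finset.mem_Ico] at hk
    push_cast
    linear_combination 3 * w0 k ^ 2 * refl_w hk.1 hk.2
  rw [e]
  refine D.sub (D.sum fun k hk => ?_) ((D.nat 3).mul
    (D.pp.mul (D_pow (s := 4) (by norm_num) (by omega)) (k := 2) (by norm_num)) (by norm_num))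
  rw [Finset.mem_Ico] at hk
  have r := D_refl hk.1 hk.2
  have x := D_w0 hk.2
  refine D.add ((r.mul r (k := 2) (by norm_num)).mul
    ((r.mono (n := 0) (by norm_num)).sub ((D.nat 3).mul x (k := 0) (by norm_num))) (by norm_num)) ?_
  exact (D.nat 3).mul ((D.pp.mul (x.pow 3) (k := 1) (by norm_num)).mul r (k := 2) (by norm_num))
    (by norm_num)

lemma h_refl (h7 : 7 ≤ p) {k : ℕ} (hk : k < p) : D p 1 (hh w0 1 (p - k) - hh w0 1 (k + 1)) := by
  induction k with
  | zero => simpa [hh_succ] using (D_h1 h7).mono (n := 1) (by norm_num)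
  | succ k ih =>
    have h := ih (by omega)
    rw [show p - k = (p - (k+1)) + 1 by omega, hh_succ] at h
    rw [hh_succ _ _ (k+1)]
    have := h.sub (D_refl (p := p) (k := k+1) (by omega) hk)
    convert this using 1
    ring

lemma D_g13 (h7 : 7 ≤ p) : D p 1 (gg w0 1 3 p) := by
  apply D.half (by omega)
  have e : 2 * gg w0 1 3 p = ∑ k ∈ Finset.Ico 1 p,
      ((hh w0 1 (p - k) - hh w0 1 (k + 1)) * w0 (p - k) ^ 3
        + (hh w0 1 (k + 1) * (w0 k + w0 (p - k))) * (w0 k ^ 2 - w0 k * w0 (p - k) + w0 (p - k) ^ 2))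
       - hh w0 4 p := by
    have e1 : gg w0 1 3 p = ∑ k ∈ Finset.Ico 1 p, hh w0 1 k * w0 k ^ 3 := by
      unfold gg; rw [sum_Ico_one _ (by simp)]
    have e2 : gg w0 1 3 p = ∑ k ∈ Finset.Ico 1 p, hh w0 1 (p - k) * w0 (p - k) ^ 3 := by
      unfold gg; rw [sum_refl _ (by simp)]
    have e3 : hh w0 4 p = ∑ k ∈ Finset.Ico 1 p, w0 k ^ 4 := by
      unfold hh; rw [sum_Ico_one _ (by simp)]
    rw [two_mul]; nth_rw 1 [e1]; rw [e2, e3]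
    rw [← Finset.sum_add_distrib, ← Finset.sum_sub_distrib]
    refine Finset.sum_congr rfl fun k hk => ?_
    rw [hh_succ]; ring
  rw [e]
  refine D.sub (D.sum fun k hk => ?_) (D_pow (by norm_num) (by omega))
  rw [Finset.mem_Ico] at hk
  have r := D_refl hk.1 hk.2
  have x := D_w0 hk.2
  have y : D p 0 (w0 (p - k)) := D_w0 (by omega)
  refine D.add ((h_refl h7 hk.2).mul (y.pow 3) (by norm_num)) ?_
  refine D.mul (m := 1) (n := 0) ?_ ?_ (by norm_num)
  · exact (D_hh (fun k hk => D_w0 hk) 1 (by omega)).mul r (by norm_num)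
  · exact ((x.pow 2).sub (x.mul y (by norm_num))).add (y.pow 2)

lemma D_g22 (h7 : 7 ≤ p) : D p 1 (gg w0 2 2 p) := by
  apply D.half (by omega)
  have h := stuffle2 w0 2 2 p
  have h2 : D p 1 (hh w0 2 p) := D_pow (by norm_num) (by omega)
  have h4 : D p 1 (hh w0 4 p) := D_pow (by norm_num) (by omega)
  have := (h2.mul h2 (k := 1) (by norm_num)).sub h4
  convert this using 1
  rw [h]; norm_num; ring

lemma D_g31 (h7 : 7 ≤ p) : D p 1 (gg w0 3 1 p) := by
  have h := stuffle2 w0 3 1 p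
  have h4 : D p 1 (hh w0 4 p) := D_pow (by norm_num) (by omega)
  have := (((D_h3 h7).mul (D_h1 h7) (k := 1) (by norm_num)).sub h4).sub (D_g13 h7)
  convert this using 1
  rw [h]; norm_num

lemma D_t (h7 : 7 ≤ p) : D p 1 (tt w0 1 2 1 p) := by
  have h0 : ∀ k < p, D p 0 (w0 k) := fun k hk => D_w0 hk
  -- first relation
  have r1 : D p 1 (2 * tt w0 1 1 2 p + tt w0 1 2 1 p) := by
    have := (((D_h1 h7).mul (D_gg h0 1 2 le_rfl) (k := 1) (by norm_num)).sub (D_g22 h7)).sub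
      (D_g13 h7)
    convert this using 1
    rw [stuffle3]; ring
  have r2 : D p 1 (2 * tt w0 1 2 1 p + 3 * tt w0 1 1 2 p) := by
    have e : 2 * tt w0 1 2 1 p + 3 * tt w0 1 1 2 p
        = ∑ k ∈ Finset.Ico 1 p, gg w0 1 2 (p - k) * (w0 k + w0 (p - k)) := by
      have e1 : tt w0 1 2 1 p = ∑ k ∈ Finset.Ico 1 p, gg w0 1 2 (p - k) * w0 (p - k) := by
        unfold tt; rw [sum_refl _ (by simp)]; simp
      have e2 := conv_outer p
      rw [sum_Ico_one _ (by simp)] at e2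
      simp only [mul_add, Finset.sum_add_distrib]
      rw [e2, ← e1]; ring
    rw [e]
    refine D.sum fun k hk => ?_
    rw [Finset.mem_Ico] at hk
    exact (D_gg h0 1 2 (by omega)).mul (D_refl hk.1 hk.2) (by norm_num)
  have r3 := ((D.nat 2).mul r2 (k := 1) (by norm_num)).sub ((D.nat 3).mul r1 (k := 1) (by norm_num))
  convert r3 using 1
  push_cast; ring

lemma w1_sub {k : ℕ} (hk : k < p) : w1 p k - w0 k = - (p * w0 k * w1 p k) := by
  unfold w1 w0
  split_ifs with h
  · simp [h]
  · have : (k:ℚ) ≠ 0 := by exact_mod_cast h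
    have : (p:ℚ) + k ≠ 0 := by positivity
    field_simp
    ring

lemma D_w1_sub {k : ℕ} (hk : k < p) : D p 1 (w1 p k - w0 k) := by
  rw [w1_sub hk]
  exact ((D.pp.mul (D_w0 hk) (k := 1) (by norm_num)).mul (D_w1 hk) (by norm_num)).neg

lemma D_w1_pow {k : ℕ} (hk : k < p) (a : ℕ) : D p 1 (w1 p k ^ a - w0 k ^ a) := by
  induction a with
  | zero => simpa [D] using zpow_nonneg (by positivity : (0:ℚ) ≤ p) (-1)
  | succ a ih =>
    have := (ih.mul (D_w1 hk) (k := 1) (by norm_num)).add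
      (((D_w0 hk).pow a).mul (D_w1_sub hk) (k := 1) (by norm_num))
    convert this using 1
    ring

lemma D_mul_sub {x y x' y' : ℚ} (hx' : D p 0 x') (hy : D p 0 y)
    (h1 : D p 1 (x' - x)) (h2 : D p 1 (y' - y)) : D p 1 (x' * y' - x * y) := by
  have := (hx'.mul h2 (k := 1) (by norm_num)).add (h1.mul hy (k := 1) (by norm_num))
  convert this using 1
  ring

lemma D_hh_sub {n : ℕ} (hn : n ≤ p) (a : ℕ) : D p 1 (hh (w1 p) a n - hh w0 a n) := by
  unfold hh
  rw [← Finset.sum_sub_distrib]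
  exact D.sum fun k hk => D_w1_pow (by simp at hk; omega) a

lemma D_gg_sub {n : ℕ} (hn : n ≤ p) (a b : ℕ) : D p 1 (gg (w1 p) a b n - gg w0 a b n) := by
  unfold gg
  rw [← Finset.sum_sub_distrib]
  refine D.sum fun k hk => ?_
  rw [Finset.mem_range] at hk
  exact D_mul_sub (D_hh (fun k hk => D_w1 hk) a (by omega)) ((D_w0 (by omega)).pow b)
    (D_hh_sub (by omega) a) (D_w1_pow (by omega) b)

lemma D_tt_sub {n : ℕ} (hn : n ≤ p) (a b c : ℕ) :
    D p 1 (tt (w1 p) a b c n - tt w0 a b c n) := by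
  unfold tt
  rw [← Finset.sum_sub_distrib]
  refine D.sum fun k hk => ?_
  rw [Finset.mem_range] at hk
  exact D_mul_sub (D_gg (fun k hk => D_w1 hk) a b (by omega)) ((D_w0 (by omega)).pow c)
    (D_gg_sub (by omega) a b) (D_w1_pow (by omega) c)

/-- `w1 = w0 - p w0² mod p²` -/
lemma D_w1_two {k : ℕ} (hk : k < p) : D p 2 (w1 p k - w0 k + p * w0 k ^ 2) := by
  have := (D.pp.mul (D_w0 hk) (k := 1) (by norm_num)).mul (D_w1_sub hk) (k := 2) (by norm_num)
  convert this.neg using 1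
  linear_combination w1_sub hk

lemma D_w1_two' {k : ℕ} (hk : k < p) : D p 2 (w1 p k ^ 2 - w0 k ^ 2 + 2 * (p * w0 k ^ 3)) := by
  have h1 := (D_w1_two hk).mul ((D.nat 2).mul (D_w0 hk) (k := 0) (by norm_num)) (k := 2) (by norm_num)
  have h2 := (D_w1_sub hk).mul (D_w1_sub hk) (k := 2) (by norm_num)
  convert h1.add h2 using 1
  push_cast
  ring

lemma D_h1' (h7 : 7 ≤ p) : D p 2 (hh (w1 p) 1 p) := by
  have e : hh (w1 p) 1 p = hh w0 1 p - p * hh w0 2 p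
      + ∑ k ∈ Finset.range p, (w1 p k - w0 k + p * w0 k ^ 2) := by
    simp only [hh, Finset.sum_add_distrib, Finset.sum_sub_distrib, Finset.mul_sum, pow_one]
    ring
  rw [e]
  refine ((D_h1 h7).sub (D.pp.mul (D_pow (by norm_num) (by omega)) (by norm_num))).add
    (D.sum fun k hk => D_w1_two (by simpa using hk))

lemma D_h2' {n : ℕ} (hn : n ≤ p) : D p 2 (hh (w1 p) 2 n - hh w0 2 n + 2 * (p * hh w0 3 n)) := by
  have e : hh (w1 p) 2 n - hh w0 2 n + 2 * (p * hh w0 3 n)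
      = ∑ k ∈ Finset.range n, (w1 p k ^ 2 - w0 k ^ 2 + 2 * (p * w0 k ^ 3)) := by
    simp only [hh, Finset.sum_add_distrib, Finset.sum_sub_distrib, Finset.mul_sum]
  rw [e]
  exact D.sum fun k hk => D_w1_two' (by simp at hk; omega)

lemma D_g21' (h7 : 7 ≤ p) : D p 2 (gg (w1 p) 2 1 p - gg w0 2 1 p) := by
  have e : gg (w1 p) 2 1 p - gg w0 2 1 p
      = ∑ k ∈ Finset.range p, ((hh (w1 p) 2 k - hh w0 2 k + 2 * (p * hh w0 3 k)) * w0 k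
          + hh w0 2 k * (w1 p k - w0 k + p * w0 k ^ 2)
          + (hh (w1 p) 2 k - hh w0 2 k) * (w1 p k - w0 k))
        - (2:ℕ) * (p * gg w0 3 1 p) - p * gg w0 2 2 p := by
    simp only [gg, Finset.mul_sum, ← Finset.sum_sub_distrib]
    refine Finset.sum_congr rfl fun k hk => ?_
    push_cast
    ring
  rw [e]
  refine ((D.sum fun k hk => ?_).sub ((D.nat 2).mul (D.pp.mul (D_g31 h7) (k := 2) (by norm_num))
    (by norm_num))).sub (D.pp.mul (D_g22 h7) (by norm_num))
  rw [Finset.mem_range] at hk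
  refine (((D_h2' hk.le).mul (D_w0 hk) (by norm_num)).add
    ((D_hh (fun k hk => D_w0 hk) 2 hk.le).mul (D_w1_two hk) (by norm_num))).add
    ((D_hh_sub hk.le 2).mul (D_w1_sub hk) (by norm_num))

lemma D_main (h7 : 7 ≤ p) : D p 1 (tt w0 1 2 1 (2 * p)) := by
  have h0 : ∀ k < p, D p 0 (w0 k) := fun k hk => D_w0 hk
  have h1 : ∀ k < p, D p 0 (w1 p k) := fun k hk => D_w1 hk
  have hs := split_t (p := p) (p - 1)
  rw [show p - 1 + 1 = p by omega, ← two_mul] at hs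
  have hg : D p 2 (gg w0 1 2 p + gg (w1 p) 2 1 p) := by
    have e := stuffle2 w0 1 2 p
    have := ((((D_h1 h7).mul (D_hh h0 2 le_rfl) (k := 2) (by norm_num))).sub (D_h3 h7)).add
      (D_g21' h7)
    convert this using 1
    rw [e]; norm_num
  have a1 := hg.mul D.pinv (k := 1) (by norm_num)
  have a2 := (D_gg h0 1 2 le_rfl).mul (D_h1' h7) (k := 1) (by norm_num)
  have a3 := (((D_h1 h7).mul D.pinv (k := 1) (by norm_num)).mul D.pinv (k := 0) (by norm_num)).mul
    (D_h1' h7) (k := 1) (by norm_num)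
  have a4 := (D_h1 h7).mul (D_gg h1 2 1 le_rfl) (k := 1) (by norm_num)
  have a5 := (D_tt_sub (p := p) le_rfl 1 2 1).add (D_t h7)
  have := ((((a1.add a2).add a3).add a4).add a5).add (D_t h7)
  convert this using 1
  rw [hs]; ring

end padic

lemma mhs_eq (n : ℕ) : mhs [1, 2, 1] n = tt w0 1 2 1 (n + 1) := by
  have e : tt w0 1 2 1 (n + 1) = ∑ c ∈ Finset.range (n + 1), ∑ b ∈ Finset.range c,
      ∑ a ∈ Finset.Ico 1 b, w0 a * w0 b ^ 2 * w0 c := by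
    simp only [tt, gg, Finset.sum_mul, pow_one]
    refine Finset.sum_congr rfl fun c _ => Finset.sum_congr rfl fun b _ => ?_
    rw [hh, sum_Ico_one _ (by simp), Finset.sum_mul, Finset.sum_mul]
    simp
  rw [e, Finset.sum_sigma', Finset.sum_sigma']
  unfold mhs
  refine Finset.sum_bij' (fun k _ => ⟨⟨(k ⟨2, by simp⟩ : ℕ), (k ⟨1, by simp⟩ : ℕ)⟩, (k ⟨0, by simp⟩ : ℕ)⟩)
    (fun x _ => ![Fin.ofNat (n+1) x.2, Fin.ofNat (n+1) x.1.2, Fin.ofNat (n+1) x.1.1])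
    ?_ ?_ ?_ ?_ ?_
  · intro k hk
    simp only [Finset.mem_filter, Finset.mem_univ, true_and] at hk
    have h01 : k ⟨0, by simp⟩ < k ⟨1, by simp⟩ := hk.1 (by simp)
    have h12 : k ⟨1, by simp⟩ < k ⟨2, by simp⟩ := hk.1 (by simp)
    have h0 := hk.2 ⟨0, by simp⟩
    have h2 := (k ⟨2, by simp⟩).isLt
    simp only [Finset.mem_sigma, Finset.mem_range, Finset.mem_Ico]
    exact ⟨⟨h2, h12⟩, h0, h01⟩
  · rintro ⟨⟨c, b⟩, a⟩ hx
    simp only [Finset.mem_sigma, Finset.mem_range, Finset.mem_Ico] at hx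
    obtain ⟨⟨h1, h2⟩, h3, h4⟩ := hx
    have ea : a % (n+1) = a := Nat.mod_eq_of_lt (by omega)
    have eb : b % (n+1) = b := Nat.mod_eq_of_lt (by omega)
    have ec : c % (n+1) = c := Nat.mod_eq_of_lt (by omega)
    simp only [Finset.mem_filter, Finset.mem_univ, true_and]
    constructor
    · refine Fin.strictMono_iff_lt_succ (n := 2) |>.2 ?_
      intro i
      fin_cases i <;> simp [Fin.lt_def, ea, eb, ec] <;> omega
    · intro i
      change Fin 3 at i
      fin_cases i <;> simp [ea, eb, ec] <;> omega
  · intro k hk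
    funext i
    change Fin 3 at i
    fin_cases i <;> simp
  · rintro ⟨⟨c, b⟩, a⟩ hx
    simp only [Finset.mem_sigma, Finset.mem_range, Finset.mem_Ico] at hx
    obtain ⟨⟨h1, h2⟩, h3, h4⟩ := hx
    have ea : a % (n+1) = a := Nat.mod_eq_of_lt (by omega)
    have eb : b % (n+1) = b := Nat.mod_eq_of_lt (by omega)
    have ec : c % (n+1) = c := Nat.mod_eq_of_lt (by omega)
    simp [ea, eb, ec]
  · intro k hk
    have := Fin.prod_univ_three (fun i : Fin 3 => 1 / (((k i : ℕ) : ℚ) ^ [1,2,1].get i))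
    refine this.trans ?_
    simp [w0]

end MHSaux

/-- For every prime `p ≥ 7`, `p` divides the numerator of `H(1,2,1; 2p-1)`. -/
theorem stmt5 (p : ℕ) (hp : p.Prime) (hp7 : 7 ≤ p) :
    (p : ℤ) ∣ (mhs [1, 2, 1] (2 * p - 1)).num := by
  have : Fact p.Prime := ⟨hp⟩
  rw [MHSaux.mhs_eq, show 2 * p - 1 + 1 = 2 * p by omega]
  exact (MHSaux.D_main hp7).num
end

section
/- Let s be a positive integer and let p be one of the primes 2, 3, 5, 7. Then the p-divisible set J(s|p) = {n ≥ 0 : p divides the numerator of H(s;n) in lowest terms} is finite. -/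
theorem int_dvd_of_eq {a b c : ℤ} (h : a ∣ b) (e : c = b) : a ∣ c := e ▸ h

theorem binom_div (p : ℕ) (hp : p.Prime) (h5 : 5 ≤ p) (d n j : ℕ) (hd : p ^ d ∣ n * (n - 1))
    (hj : 3 ≤ j) : p ^ (d + 3) ∣ n.choose j * p ^ j := by
  rcases Nat.lt_or_ge n j with hnj | hnj
  · rw [Nat.choose_eq_zero_of_lt hnj]; simp
  obtain ⟨j, rfl⟩ : ∃ i, j = i + 2 := ⟨j - 2, by omega⟩
  obtain ⟨n, rfl⟩ : ∃ i, n = i + 2 := ⟨n - 2, by omega⟩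
  have h1 : (n + 2) * (n + 1) * n.choose j = (n + 2).choose (j + 2) * ((j + 2) * (j + 1)) := by
    have e1 := Nat.add_one_mul_choose_eq (n + 1) (j + 1)
    have e2 := Nat.add_one_mul_choose_eq n j
    calc (n + 2) * (n + 1) * n.choose j = (n + 2) * ((n + 1) * n.choose j) := by ring
      _ = (n + 1 + 1) * ((n + 1).choose (j + 1)) * (j + 1) := by rw [e2]; ring
      _ = _ := by rw [e1]; ring
  obtain ⟨e, w, hw, hew⟩ := Nat.exists_eq_pow_mul_and_not_dvd (n := (j + 2) * (j + 1))
    (by positivity) p hp.ne_one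
  have h2 : p ^ d ∣ (n + 2).choose (j + 2) * p ^ e := by
    have : p ^ d ∣ (n + 2).choose (j + 2) * p ^ e * w := by
      rw [mul_assoc, ← hew, ← h1]
      exact Dvd.dvd.mul_right (by simpa using hd) _
    exact (Nat.Coprime.pow_left d ((Nat.Prime.coprime_iff_not_dvd hp).2 hw)).dvd_of_dvd_mul_right this
  have h3 : p ^ e ≤ j + 2 := by
    have hdv : p ^ e ∣ (j + 2) * (j + 1) := ⟨w, hew⟩
    by_cases hpj : p ∣ j + 1
    · have hc : Nat.Coprime p (j + 2) := by
        rw [Nat.Prime.coprime_iff_not_dvd hp]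
        intro hh
        have := (Nat.dvd_add_right hpj).1 (show p ∣ (j + 1) + 1 from hh)
        exact hp.one_lt.ne' (Nat.dvd_one.1 this)
      have := (Nat.Coprime.pow_left e hc).dvd_of_dvd_mul_left hdv
      have := Nat.le_of_dvd (by omega) this
      omega
    · have hc : Nat.Coprime p (j + 1) := (Nat.Prime.coprime_iff_not_dvd hp).2 hpj
      have := (Nat.Coprime.pow_left e hc).dvd_of_dvd_mul_right hdv
      exact Nat.le_of_dvd (by omega) this
  have h4 : e + 3 ≤ j + 2 := by
    rcases Nat.eq_zero_or_pos e with h0 | h0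
    · omega
    · have a1 : 5 ^ e ≤ p ^ e := Nat.pow_le_pow_left h5 e
      have a2 : ∀ i : ℕ, i + 5 ≤ 5 ^ (i + 1) := by
        intro i
        induction i with
        | zero => norm_num
        | succ i ih => rw [pow_succ]; omega
      have := a2 (e - 1)
      rw [Nat.sub_add_cancel h0] at this
      omega
  calc p ^ (d + 3) = p ^ d * p ^ 3 := pow_add _ _ _
    _ ∣ (n + 2).choose (j + 2) * p ^ e * p ^ 3 := Nat.mul_dvd_mul_right h2 _
    _ = (n + 2).choose (j + 2) * p ^ (e + 3) := by rw [pow_add]; ring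
    _ ∣ _ := Nat.mul_dvd_mul_left _ (pow_dvd_pow _ h4)

/-- second-order expansion -/
theorem expand2 (p : ℕ) (hp : p.Prime) (h5 : 5 ≤ p) (d n : ℕ) (hd : p ^ d ∣ (n + 2) * (n + 1))
    (x : ℤ) : (p : ℤ) ^ (d + 3) ∣ (x + p) ^ (n + 2)
      - (x ^ (n + 2) + (n + 2 : ℕ) * p * x ^ (n + 1) + (n + 2).choose 2 * p ^ 2 * x ^ n) := by
  rw [add_comm x, add_pow, Finset.sum_range_succ', Finset.sum_range_succ', Finset.sum_range_succ']
  have : (p : ℤ) ^ (d + 3) ∣ ∑ k ∈ Finset.range n, (p : ℤ) ^ (k + 1 + 1 + 1) *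
      x ^ (n + 2 - (k + 1 + 1 + 1)) * ((n + 2).choose (k + 1 + 1 + 1) : ℕ) := by
    apply Finset.dvd_sum
    intro k _
    have := binom_div p hp h5 d (n + 2) (k + 3) (by simpa using hd) (by omega)
    have h := Int.natCast_dvd_natCast.2 this
    push_cast at h
    have := h.mul_right (x ^ (n + 2 - (k + 1 + 1 + 1)))
    refine int_dvd_of_eq this ?_
    ring
  refine int_dvd_of_eq this ?_
  simp
  ring

theorem expand1 (p : ℕ) (hp : p.Prime) (h5 : 5 ≤ p) (d n : ℕ) (hd : p ^ d ∣ (n + 2))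
    (x : ℤ) : (p : ℤ) ^ (d + 2) ∣ (x + p) ^ (n + 2)
      - (x ^ (n + 2) + (n + 2 : ℕ) * p * x ^ (n + 1)) := by
  have h := expand2 p hp h5 d n (hd.mul_right _) x
  have h1 : (p : ℤ) ^ (d + 2) ∣ (p : ℤ) ^ (d + 3) := pow_dvd_pow _ (by omega)
  have h2 : p ^ d ∣ (n + 2).choose 2 := by
    have e := Nat.triangle_succ (n + 1)
    have e1 := Nat.add_one_mul_choose_eq (n + 1) 1
    simp at e1
    have : p ^ d ∣ (n + 2).choose 2 * 2 := by
      rw [← e1]; exact hd.mul_right _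
    refine (Nat.Coprime.pow_left d ?_).dvd_of_dvd_mul_right this
    rw [Nat.Prime.coprime_iff_not_dvd hp]
    intro hh
    have := Nat.le_of_dvd (by norm_num) hh
    omega
  have h3 := Int.natCast_dvd_natCast.2 h2
  have h4 : (p : ℤ) ^ (d + 2) ∣ (n + 2).choose 2 * p ^ 2 * x ^ n := by
    rw [pow_add]
    push_cast at h3
    exact (mul_dvd_mul_right h3 _).mul_right _
  have := dvd_add (h1.trans h) h4
  refine int_dvd_of_eq this ?_
  ring

def PS (p m : ℕ) : ℤ := ∑ k ∈ Finset.range p, (k : ℤ) ^ m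

theorem dvd_cancel (p : ℕ) (hp : p.Prime) (K : ℕ) (a b : ℤ) (hb : ¬ (p : ℤ) ∣ b)
    (h : (p : ℤ) ^ K ∣ a * b) : (p : ℤ) ^ K ∣ a := by
  have : IsCoprime ((p : ℤ)) b := (Nat.prime_iff_prime_int.1 hp).coprime_iff_not_dvd.2 hb
  exact (IsCoprime.pow_left this).dvd_of_dvd_mul_right h

theorem mod_pow5 (b : ℤ) (hb : b ^ 4 % 5 = 1) (q r : ℕ) : (b ^ (4 * q + r)) ≡ b ^ r [ZMOD 5] := by
  rw [pow_add, pow_mul]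
  have : b ^ 4 ≡ 1 [ZMOD 5] := hb
  simpa using (this.pow q).mul_right (b ^ r)

theorem mod_pow7 (b : ℤ) (hb : b ^ 6 % 7 = 1) (q r : ℕ) : (b ^ (6 * q + r)) ≡ b ^ r [ZMOD 7] := by
  rw [pow_add, pow_mul]
  have : b ^ 6 ≡ 1 [ZMOD 7] := hb
  simpa using (this.pow q).mul_right (b ^ r)

theorem PS5_even (m b : ℕ) (hm : Even (m + 2)) (hb : ¬ 5 ^ (b + 1) ∣ m + 2) :
    ¬ (5 : ℤ) ^ (b + 2) ∣ PS 5 (m + 2) := by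
  intro h
  have hp : Nat.Prime 5 := by norm_num
  obtain ⟨c, w, hw, hc⟩ := Nat.exists_eq_pow_mul_and_not_dvd (n := m + 2)
    (by positivity) 5 (by norm_num)
  have hcb : c ≤ b := by
    by_contra hh
    exact hb (dvd_trans (pow_dvd_pow 5 (by omega)) ⟨w, hc⟩)
  have h' : (5 : ℤ) ^ (c + 2) ∣ PS 5 (m + 2) := (pow_dvd_pow 5 (by omega)).trans h
  have hcd : 5 ^ c ∣ m + 2 := ⟨w, hc⟩
  have e1 := expand1 5 hp (by norm_num) c m hcd 1
  have e3 := expand1 5 hp (by norm_num) c m hcd 3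
  have hPS : PS 5 (m + 2) = 1 + 2 ^ (m + 2) + 3 ^ (m + 2) + 4 ^ (m + 2) := by
    simp [PS, Finset.sum_range_succ]
  have key : (5 : ℤ) ^ (c + 2) ∣ (5 : ℤ) ^ (c + 1) * (w * (1 + 3 ^ (m + 1))) := by
    have := dvd_sub (dvd_sub (h'.mul_left (2 ^ (m + 2) - 1)) e1) e3
    refine int_dvd_of_eq this ?_
    have hc' : ((m + 2 : ℕ) : ℤ) = 5 ^ c * w := by exact_mod_cast hc
    rw [hPS, hc']
    have q4 : (4 : ℤ) ^ (m + 2) = 2 ^ (m + 2) * 2 ^ (m + 2) := by rw [← mul_pow]; norm_num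
    have q6 : (6 : ℤ) ^ (m + 2) = 2 ^ (m + 2) * 3 ^ (m + 2) := by rw [← mul_pow]; norm_num
    have q8 : (8 : ℤ) ^ (m + 2) = 2 ^ (m + 2) * 4 ^ (m + 2) := by rw [← mul_pow]; norm_num
    push_cast
    rw [q6, q8, q4]
    ring
  rw [show c + 2 = (c + 1) + 1 by ring, pow_succ (5 : ℤ) (c + 1),
    mul_dvd_mul_iff_left (by positivity)] at key
  rcases (Int.prime_iff_natAbs_prime.2 (by norm_num : Nat.Prime (Int.natAbs 5))).dvd_or_dvd key with k | k
  · exact hw (by exact_mod_cast k)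
  · -- m + 2 is even
    obtain ⟨q, r, hr, hq⟩ : ∃ q r : ℕ, r < 4 ∧ m + 2 = 4 * q + r :=
      ⟨(m + 2) / 4, (m + 2) % 4, Nat.mod_lt _ (by norm_num), (Nat.div_add_mod _ _).symm⟩
    have hr2 : r = 0 ∨ r = 2 := by
      obtain ⟨t, ht⟩ := hm; omega
    rcases hr2 with rfl | rfl
    · have h5 : (5 : ℤ) ∣ PS 5 (m + 2) := (dvd_pow_self 5 (by omega)).trans h'
      rw [hPS, hq] at h5
      have m2 := mod_pow5 2 (by norm_num) q 0
      have m3 := mod_pow5 3 (by norm_num) q 0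
      have m4 := mod_pow5 4 (by norm_num) q 0
      simp only [Int.ModEq] at m2 m3 m4
      omega
    · have m3 := mod_pow5 3 (by norm_num) q 1
      rw [show m + 1 = 4 * q + 1 by omega] at k
      simp only [Int.ModEq] at m3
      omega

theorem PS7_even (m b : ℕ) (hm : Even (m + 2)) (hb : ¬ 7 ^ (b + 1) ∣ m + 2) :
    ¬ (7 : ℤ) ^ (b + 2) ∣ PS 7 (m + 2) := by
  intro h
  have hp : Nat.Prime 7 := by norm_num
  obtain ⟨c, w, hw, hc⟩ := Nat.exists_eq_pow_mul_and_not_dvd (n := m + 2)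
    (by positivity) 7 (by norm_num)
  have hcb : c ≤ b := by
    by_contra hh
    exact hb (dvd_trans (pow_dvd_pow 7 (by omega)) ⟨w, hc⟩)
  have h' : (7 : ℤ) ^ (c + 2) ∣ PS 7 (m + 2) := (pow_dvd_pow 7 (by omega)).trans h
  have hcd : 7 ^ c ∣ m + 2 := ⟨w, hc⟩
  have e1 := expand1 7 hp (by norm_num) c m hcd 1
  have e3 := expand1 7 hp (by norm_num) c m hcd 3
  have e5 := expand1 7 hp (by norm_num) c m hcd 5
  have hPS : PS 7 (m + 2) = 1 + 2 ^ (m + 2) + 3 ^ (m + 2) + 4 ^ (m + 2) + 5 ^ (m + 2)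
      + 6 ^ (m + 2) := by
    simp [PS, Finset.sum_range_succ]
  have key : (7 : ℤ) ^ (c + 2) ∣ (7 : ℤ) ^ (c + 1) * (w * (1 + 3 ^ (m + 1) + 5 ^ (m + 1))) := by
    have := dvd_sub (dvd_sub (dvd_sub (h'.mul_left (2 ^ (m + 2) - 1)) e1) e3) e5
    refine int_dvd_of_eq this ?_
    have hc' : ((m + 2 : ℕ) : ℤ) = 7 ^ c * w := by exact_mod_cast hc
    rw [hPS, hc']
    have q4 : (4 : ℤ) ^ (m + 2) = 2 ^ (m + 2) * 2 ^ (m + 2) := by rw [← mul_pow]; norm_num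
    have q6 : (6 : ℤ) ^ (m + 2) = 2 ^ (m + 2) * 3 ^ (m + 2) := by rw [← mul_pow]; norm_num
    have q8 : (8 : ℤ) ^ (m + 2) = 2 ^ (m + 2) * 4 ^ (m + 2) := by rw [← mul_pow]; norm_num
    have q10 : (10 : ℤ) ^ (m + 2) = 2 ^ (m + 2) * 5 ^ (m + 2) := by rw [← mul_pow]; norm_num
    have q12 : (12 : ℤ) ^ (m + 2) = 2 ^ (m + 2) * 6 ^ (m + 2) := by rw [← mul_pow]; norm_num
    push_cast
    rw [q8, q10, q12, q6, q4]
    ring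
  rw [show c + 2 = (c + 1) + 1 by ring, pow_succ (7 : ℤ) (c + 1),
    mul_dvd_mul_iff_left (by positivity)] at key
  rcases (Int.prime_iff_natAbs_prime.2 (by norm_num : Nat.Prime (Int.natAbs 7))).dvd_or_dvd key with k | k
  · exact hw (by exact_mod_cast k)
  · obtain ⟨q, r, hr, hq⟩ : ∃ q r : ℕ, r < 6 ∧ m + 2 = 6 * q + r :=
      ⟨(m + 2) / 6, (m + 2) % 6, Nat.mod_lt _ (by norm_num), (Nat.div_add_mod _ _).symm⟩
    have hr2 : r = 0 ∨ r = 2 ∨ r = 4 := by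
      obtain ⟨t, ht⟩ := hm; omega
    rcases hr2 with rfl | rfl | rfl
    · have h5 : (7 : ℤ) ∣ PS 7 (m + 2) := (dvd_pow_self 7 (by omega)).trans h'
      rw [hPS, hq] at h5
      have m2 := mod_pow7 2 (by norm_num) q 0
      have m3 := mod_pow7 3 (by norm_num) q 0
      have m4 := mod_pow7 4 (by norm_num) q 0
      have m5 := mod_pow7 5 (by norm_num) q 0
      have m6 := mod_pow7 6 (by norm_num) q 0
      simp only [Int.ModEq] at m2 m3 m4 m5 m6
      omega
    · have m3 := mod_pow7 3 (by norm_num) q 1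
      have m5 := mod_pow7 5 (by norm_num) q 1
      rw [show m + 1 = 6 * q + 1 by omega] at k
      simp only [Int.ModEq] at m3 m5
      omega
    · have m3 := mod_pow7 3 (by norm_num) q 3
      have m5 := mod_pow7 5 (by norm_num) q 3
      rw [show m + 1 = 6 * q + 3 by omega] at k
      simp only [Int.ModEq] at m3 m5
      omega

theorem PS_even (p m b : ℕ) (hp : p = 5 ∨ p = 7) (hm : Even (m + 2)) (hb : ¬ p ^ (b + 1) ∣ m + 2) :
    ¬ (p : ℤ) ^ (b + 2) ∣ PS p (m + 2) := by
  rcases hp with rfl | rfl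
  · exact PS5_even m b hm hb
  · exact PS7_even m b hm hb

theorem PS_reflect (p m : ℕ) (hm : m ≠ 0) :
    PS p m = ∑ k ∈ Finset.range p, (-(k : ℤ) + p) ^ m - (p : ℤ) ^ m := by
  have h := Finset.sum_range_reflect (fun k => ((k : ℤ)) ^ m) (p + 1)
  rw [Finset.sum_range_succ (fun k => ((k : ℤ)) ^ m) p] at h
  have : ∑ j ∈ Finset.range (p + 1), (((p + 1 - 1 - j : ℕ) : ℤ)) ^ m
      = ∑ k ∈ Finset.range p, (-(k : ℤ) + p) ^ m := by
    rw [Finset.sum_range_succ]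
    simp only [add_tsub_cancel_right, tsub_self, Nat.cast_zero, zero_pow hm, add_zero]
    apply Finset.sum_congr rfl
    intro k hk
    have : k ≤ p := (Finset.mem_range.1 hk).le
    push_cast [this]
    ring
  rw [this] at h
  rw [PS]
  linarith

theorem PS_odd_dvd (p m : ℕ) (hm : Odd m) (h2 : p = 5 ∨ p = 7) : (p : ℤ) ∣ PS p m := by
  have hm0 : m ≠ 0 := by rintro rfl; simp at hm
  have h := PS_reflect p m hm0
  have hs : (p : ℤ) ∣ ∑ k ∈ Finset.range p, ((-(k : ℤ) + p) ^ m + (k : ℤ) ^ m) := by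
    apply Finset.dvd_sum
    intro k _
    have := hm.add_dvd_pow_add_pow (-(k : ℤ) + p) (k : ℤ)
    simpa using this
  rw [Finset.sum_add_distrib] at hs
  change (p : ℤ) ∣ _ + PS p m at hs
  have h3 : (p : ℤ) ∣ 2 * PS p m := by
    have := dvd_sub hs (dvd_pow_self (p : ℤ) hm0)
    refine int_dvd_of_eq this ?_
    linarith
  rcases h2 with rfl | rfl <;> push_cast at * <;> omega

theorem PS_odd (p n a b n' m' : ℕ) (hp : p = 5 ∨ p = 7) (hodd : Odd (n + 3))
    (ha : n + 3 = p ^ a * n') (ha' : ¬ p ∣ n') (hb : n + 2 = p ^ b * m') (hb' : ¬ p ∣ m') :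
    ¬ (p : ℤ) ^ (a + b + 3) ∣ PS p (n + 3) := by
  intro h
  have hpp : p.Prime := by rcases hp with rfl | rfl <;> norm_num
  have h5 : 5 ≤ p := by omega
  have hd : p ^ (a + b) ∣ (n + 3) * (n + 2) := by
    rw [pow_add]; exact mul_dvd_mul ⟨_, ha⟩ ⟨_, hb⟩
  have hR := PS_reflect p (n + 3) (by omega)
  have hs : (p : ℤ) ^ (a + b + 3) ∣ ∑ k ∈ Finset.range p, ((-(k : ℤ) + p) ^ (n + 3) -
     ((-(k : ℤ)) ^ (n + 3) + (n + 3 : ℕ) * p * (-(k : ℤ)) ^ (n + 2)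
      + (n + 3).choose 2 * p ^ 2 * (-(k : ℤ)) ^ (n + 1))) := by
    apply Finset.dvd_sum
    intro k _
    exact expand2 p hpp h5 (a + b) (n + 1) hd _
  have o3 : ∀ k : ℤ, (-k) ^ (n + 3) = - k ^ (n + 3) := fun k => hodd.neg_pow k
  have o2 : ∀ k : ℤ, (-k) ^ (n + 2) = k ^ (n + 2) := fun k =>
    Even.neg_pow (by obtain ⟨t, ht⟩ := hodd; exact ⟨t, by omega⟩) k
  have hodd1 : Odd (n + 1) := by obtain ⟨t, ht⟩ := hodd; exact ⟨t - 1, by omega⟩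
  have o1 : ∀ k : ℤ, (-k) ^ (n + 1) = - k ^ (n + 1) := fun k => hodd1.neg_pow k
  have hs2 : (p : ℤ) ^ (a + b + 3) ∣ (∑ k ∈ Finset.range p, (-(k : ℤ) + p) ^ (n + 3)) -
     (- PS p (n + 3) + (n + 3 : ℕ) * p * PS p (n + 2)
      - (n + 3).choose 2 * p ^ 2 * PS p (n + 1)) := by
    refine int_dvd_of_eq hs ?_
    simp only [o3, o2, o1, PS, Finset.sum_sub_distrib, Finset.sum_add_distrib, Finset.mul_sum,
      Finset.sum_neg_distrib, mul_neg]
    ring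
  have hch : (p : ℤ) ^ (a + b + 3) ∣ (n + 3).choose 2 * p ^ 2 * PS p (n + 1) := by
    have h2 : p ^ (a + b) ∣ (n + 3).choose 2 := by
      have e1 := Nat.add_one_mul_choose_eq (n + 2) 1
      simp at e1
      have : p ^ (a + b) ∣ (n + 3).choose 2 * 2 := by
        rw [← e1]; exact hd
      refine (Nat.Coprime.pow_left _ ?_).dvd_of_dvd_mul_right this
      rw [Nat.Prime.coprime_iff_not_dvd hpp]
      intro hh
      have := Nat.le_of_dvd (by norm_num) hh
      omega
    have h3 := Int.natCast_dvd_natCast.2 h2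
    push_cast at h3
    have := mul_dvd_mul (mul_dvd_mul_right h3 ((p : ℤ) ^ 2)) (PS_odd_dvd p (n + 1) hodd1 hp)
    rwa [← pow_add, ← pow_succ] at this
  have hpn : (p : ℤ) ^ (a + b + 3) ∣ (p : ℤ) ^ (n + 3) := by
    apply pow_dvd_pow
    -- p^(a+b) ∣ one of them
    have hlt : ∀ i, i < p ^ i := fun i => Nat.lt_pow_self (by omega)
    have ha0 : 0 < n' := Nat.pos_of_ne_zero (by rintro rfl; simp at ha')
    have hb0 : 0 < m' := Nat.pos_of_ne_zero (by rintro rfl; simp at hb')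
    have l1 : p ^ a ≤ n + 3 := by rw [ha]; exact Nat.le_mul_of_pos_right _ ha0
    have l2 : p ^ b ≤ n + 2 := by rw [hb]; exact Nat.le_mul_of_pos_right _ hb0
    have a2 : ∀ i : ℕ, i + 5 ≤ 5 ^ (i + 1) := by
      intro i
      induction i with
      | zero => norm_num
      | succ i ih => rw [pow_succ]; omega
    have a3 : ∀ i : ℕ, 1 ≤ i → i + 4 ≤ p ^ i := by
      intro i hi
      have := a2 (i - 1)
      rw [Nat.sub_add_cancel hi] at this
      have := Nat.pow_le_pow_left h5 i
      omega
    by_cases ha1 : a = 0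
    · by_cases hb1 : b = 0
      · omega
      · have := a3 b (by omega); omega
    · by_cases hb1 : b = 0
      · have := a3 a (by omega); omega
      · exfalso
        have d1 : p ∣ n + 3 := (dvd_pow_self p ha1).trans ⟨_, ha⟩
        have d2 : p ∣ n + 2 := (dvd_pow_self p hb1).trans ⟨_, hb⟩
        have := (Nat.dvd_add_right d2).1 (show p ∣ (n + 2) + 1 from d1)
        exact hpp.one_lt.ne' (Nat.dvd_one.1 this)
  have key : (p : ℤ) ^ (a + b + 3) ∣ (n + 3 : ℕ) * p * PS p (n + 2) := by
    have := dvd_add (dvd_sub (dvd_add (h.mul_left 2) hpn) hs2) hch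
    refine int_dvd_of_eq this ?_
    rw [hR]; ring
  have key2 : (p : ℤ) ^ (b + 2) ∣ PS p (n + 2) * n' := by
    have e : ((n + 3 : ℕ) : ℤ) * p * PS p (n + 2) = (p : ℤ) ^ (a + 1) * (PS p (n + 2) * n') := by
      rw [ha]; push_cast; ring
    rw [e, show a + b + 3 = (a + 1) + (b + 2) by ring, pow_add] at key
    exact (mul_dvd_mul_iff_left (pow_ne_zero _ (by exact_mod_cast hpp.ne_zero))).1 key
  have key3 := dvd_cancel p hpp _ _ _ (by exact_mod_cast ha') key2
  refine PS_even p n b hp (by obtain ⟨t, ht⟩ := hodd; exact ⟨t, by omega⟩) ?_ key3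
  intro hh
  rw [hb, pow_succ] at hh
  exact hb' ((mul_dvd_mul_iff_left (pow_ne_zero _ hpp.ne_zero)).1 hh)

theorem PS_main (p n s : ℕ) (hp : p = 5 ∨ p = 7) (hs : 3 ≤ s)
    (hn : n + 3 + s = (p - 1) * p ^ (s - 1)) : ¬ (p : ℤ) ^ s ∣ PS p (n + 3) := by
  have hpp : p.Prime := by rcases hp with rfl | rfl <;> norm_num
  have h5 : 5 ≤ p := by omega
  obtain ⟨a, n', ha', ha⟩ := Nat.exists_eq_pow_mul_and_not_dvd (n := n + 3)
    (by positivity) p hpp.ne_one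
  obtain ⟨b, m', hb', hb⟩ := Nat.exists_eq_pow_mul_and_not_dvd (n := n + 2)
    (by positivity) p hpp.ne_one
  have a2 : ∀ i : ℕ, i + 5 ≤ 5 ^ (i + 1) := by
    intro i
    induction i with
    | zero => norm_num
    | succ i ih => rw [pow_succ]; omega
  have hlt : s + 2 ≤ p ^ (s - 2) := by
    have := a2 (s - 3)
    have h1 := Nat.pow_le_pow_left h5 (s - 2)
    rw [show s - 3 + 1 = s - 2 by omega] at this
    omega
  have hbig : p ^ (s - 2) ∣ (p - 1) * p ^ (s - 1) :=
    (pow_dvd_pow p (by omega)).mul_left _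
  have ca : a ≤ s - 3 := by
    by_contra hh
    have d1 : p ^ (s - 2) ∣ n + 3 := (pow_dvd_pow p (by omega)).trans ⟨_, ha⟩
    rw [← hn] at hbig
    have := Nat.le_of_dvd (by omega) ((Nat.dvd_add_right d1).1 hbig)
    omega
  have cb : b ≤ s - 3 := by
    by_contra hh
    have d1 : p ^ (s - 2) ∣ n + 2 := (pow_dvd_pow p (by omega)).trans ⟨_, hb⟩
    rw [← hn, show n + 3 + s = (n + 2) + (s + 1) by ring] at hbig
    have := Nat.le_of_dvd (by omega) ((Nat.dvd_add_right d1).1 hbig)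
    omega
  have cab : a = 0 ∨ b = 0 := by
    by_contra! hh
    have d1 : p ∣ n + 3 := (dvd_pow_self p hh.1).trans ⟨_, ha⟩
    have d2 : p ∣ n + 2 := (dvd_pow_self p hh.2).trans ⟨_, hb⟩
    have := (Nat.dvd_add_right d2).1 (show p ∣ (n + 2) + 1 from d1)
    exact hpp.one_lt.ne' (Nat.dvd_one.1 this)
  intro h
  rcases Nat.even_or_odd (n + 3) with he | ho
  · have : ¬ p ^ (a + 1) ∣ n + 3 := by
      intro hh
      rw [ha, pow_succ] at hh
      exact ha' ((mul_dvd_mul_iff_left (pow_ne_zero _ hpp.ne_zero)).1 hh)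
    exact PS_even p (n + 1) a hp he this ((pow_dvd_pow _ (by omega)).trans h)
  · exact PS_odd p n a b n' m' hp ho ha ha' hb hb' ((pow_dvd_pow _ (by omega)).trans h)

/-- `x ∈ p^K ℤ_(p)`. -/
def DV (p K : ℕ) (x : ℚ) : Prop := ∃ u v : ℤ, ¬ (p : ℤ) ∣ v ∧ x * v = (p : ℚ) ^ K * u

theorem DV.add {p K : ℕ} (hp : p.Prime) {x y : ℚ} (hx : DV p K x) (hy : DV p K y) :
    DV p K (x + y) := by
  obtain ⟨u, v, hv, h⟩ := hx
  obtain ⟨u', v', hv', h'⟩ := hy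
  refine ⟨u * v' + u' * v, v * v', fun hh => ?_, ?_⟩
  · exact ((Nat.prime_iff_prime_int.1 hp).dvd_or_dvd hh).elim hv hv'
  · push_cast
    linear_combination (v' : ℚ) * h + v * h'

theorem DV.neg {p K : ℕ} {x : ℚ} (hx : DV p K x) : DV p K (-x) := by
  obtain ⟨u, v, hv, h⟩ := hx
  exact ⟨-u, v, hv, by push_cast; linear_combination -h⟩

theorem DV.sub {p K : ℕ} (hp : p.Prime) {x y : ℚ} (hx : DV p K x) (hy : DV p K y) :
    DV p K (x - y) := by
  rw [sub_eq_add_neg]; exact hx.add hp hy.neg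

theorem DV.zero {p K : ℕ} (hp : p.Prime) : DV p K 0 :=
  ⟨0, 1, fun h => (Nat.prime_iff_prime_int.1 hp).not_isUnit (isUnit_of_dvd_one h), by simp⟩

theorem DV.sum {p K : ℕ} (hp : p.Prime) {ι : Type*} (S : Finset ι) (f : ι → ℚ)
    (h : ∀ i ∈ S, DV p K (f i)) : DV p K (∑ i ∈ S, f i) :=
  Finset.sum_induction f (DV p K) (fun _ _ => DV.add hp) (DV.zero hp) h

theorem DV.mul_int {p K : ℕ} {x : ℚ} (hx : DV p K x) (a : ℤ) : DV p K (x * a) := by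
  obtain ⟨u, v, hv, h⟩ := hx
  exact ⟨u * a, v, hv, by push_cast; linear_combination a * h⟩

theorem DV.int_iff {p K : ℕ} (hp : p.Prime) (a : ℤ) : DV p K (a : ℚ) ↔ (p : ℤ) ^ K ∣ a := by
  constructor
  · rintro ⟨u, v, hv, h⟩
    refine dvd_cancel p hp K a v hv ⟨u, ?_⟩
    exact_mod_cast h
  · rintro ⟨u, rfl⟩
    exact ⟨u, 1, fun h => (Nat.prime_iff_prime_int.1 hp).not_isUnit (isUnit_of_dvd_one h),
      by push_cast; ring⟩

theorem DV.mono {p K K' : ℕ} {x : ℚ} (h : K' ≤ K) (hx : DV p K x) : DV p K' x := by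
  obtain ⟨u, v, hv, e⟩ := hx
  refine ⟨(p : ℤ) ^ (K - K') * u, v, hv, ?_⟩
  rw [e]; push_cast
  rw [← mul_assoc, ← pow_add, Nat.add_sub_cancel' h]

theorem DV.scale {p K s : ℕ} (hp : p.Prime) {x : ℚ} :
    DV p (K + s) x ↔ DV p K (x / (p : ℚ) ^ s) := by
  have : (p : ℚ) ^ s ≠ 0 := pow_ne_zero _ (by exact_mod_cast hp.ne_zero)
  constructor
  · rintro ⟨u, v, hv, e⟩
    refine ⟨u, v, hv, ?_⟩
    field_simp
    rw [e, pow_add]; ring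
  · rintro ⟨u, v, hv, e⟩
    refine ⟨u, v, hv, ?_⟩
    field_simp at e
    rw [e, pow_add]; ring

theorem DV.of_num {p : ℕ} (hp : p.Prime) (x : ℚ) (h : (p : ℤ) ∣ x.num) : DV p 1 x := by
  obtain ⟨u, hu⟩ := h
  refine ⟨u, x.den, ?_, ?_⟩
  · intro hd
    have h1 : p ∣ x.den := by exact_mod_cast hd
    have h2 : p ∣ x.num.natAbs := Int.natCast_dvd.1 ⟨u, hu⟩
    exact hp.one_lt.ne' (Nat.dvd_one.1 (x.reduced ▸ Nat.dvd_gcd h2 h1))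
  · have := Rat.mul_den_eq_num x
    push_cast
    rw [this, hu]; push_cast; ring

/-- harmonic sum -/
def HS (s n : ℕ) : ℚ := ∑ k ∈ Finset.range (n + 1), 1 / (k : ℚ) ^ s

/-- restricted harmonic sum -/
def HR (p s n : ℕ) : ℚ := ∑ k ∈ Finset.range (n + 1), if p ∣ k then 0 else 1 / (k : ℚ) ^ s

theorem mhs_eq (s n : ℕ) (hs : 0 < s) : mhs [s] n = HS s n := by
  unfold mhs HS
  rw [Finset.sum_range_succ']
  simp only [Nat.cast_zero, zero_pow hs.ne', div_zero, add_zero]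
  symm
  refine Finset.sum_bij' (fun k hk => fun _ => (⟨k + 1, by have := Finset.mem_range.1 hk; omega⟩ : Fin (n + 1)))
    (fun f _ => ((f ⟨0, by simp⟩ : Fin (n + 1)) : ℕ) - 1) ?_ ?_ ?_ ?_ ?_
  · intro k hk
    simp only [Finset.mem_filter, Finset.mem_univ, true_and]
    refine ⟨?_, fun i => by simp⟩
    intro a b hab
    exact absurd hab (by have := Subsingleton.elim (α := Fin 1) a b; subst this; simp)
  · intro f hf
    simp only [Finset.mem_filter, Finset.mem_univ, true_and] at hf
    have := hf.2 ⟨0, by simp⟩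
    have h2 := (f ⟨0, by simp⟩).2
    rw [Finset.mem_range]; omega
  · intro k hk
    simp
  · intro f hf
    simp only [Finset.mem_filter, Finset.mem_univ, true_and] at hf
    funext i
    have hi : i = ⟨0, by simp⟩ := Subsingleton.elim (α := Fin 1) _ _
    subst hi
    have := hf.2 ⟨0, by simp⟩
    apply Fin.ext
    simp only
    omega
  · intro k hk
    simp

theorem HS_rec (p s n : ℕ) (hp : p.Prime) (hs : 0 < s) :
    HS s n = HS s (n / p) / (p : ℚ) ^ s + HR p s n := by
  induction n with
  | zero => simp [HS, HR, hs.ne']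
  | succ n ih =>
    have e1 : HS s (n + 1) = HS s n + 1 / ((n + 1 : ℕ) : ℚ) ^ s := by
      rw [HS, Finset.sum_range_succ]; rfl
    have e2 : HR p s (n + 1) = HR p s n + if p ∣ (n + 1) then 0 else 1 / ((n + 1 : ℕ) : ℚ) ^ s := by
      rw [HR, Finset.sum_range_succ]; rfl
    rw [e1, e2, ih, Nat.succ_div]
    by_cases hd : p ∣ n + 1
    · simp only [hd, if_true]
      have e3 : HS s (n / p + 1) = HS s (n / p) + 1 / ((n / p + 1 : ℕ) : ℚ) ^ s := by
        rw [HS, Finset.sum_range_succ]; rfl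
      rw [e3]
      have e4 : (n + 1 : ℕ) = p * (n / p + 1) := by
        have := Nat.succ_div_of_dvd hd
        rw [← this, Nat.mul_div_cancel' hd]
      rw [e4]
      have : (p : ℚ) ≠ 0 := by exact_mod_cast hp.ne_zero
      push_cast
      rw [mul_pow]
      field_simp
      ring
    · simp only [hd, if_false]
      simp; ring

theorem HR_int (p s n : ℕ) (hp : p.Prime) : DV p 0 (HR p s n) := by
  apply DV.sum hp
  intro k _
  split_ifs with h
  · exact DV.zero hp
  · refine ⟨1, (k : ℤ) ^ s, fun hh => ?_, ?_⟩
    · exact h (by exact_mod_cast (Nat.prime_iff_prime_int.1 hp).dvd_of_dvd_pow hh)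
    · have : (k : ℚ) ≠ 0 := by rintro h0; exact h (by simp_all)
      push_cast
      field_simp

theorem HR_approx (p s n K e : ℕ) (hp : p.Prime) (hK : 1 ≤ K) (he : K ≤ e)
    (hes : e + s = (p - 1) * p ^ (K - 1)) :
    DV p K (HR p s n - ((∑ k ∈ Finset.range (n + 1), (k : ℤ) ^ e : ℤ) : ℚ)) := by
  rw [HR, Int.cast_sum, ← Finset.sum_sub_distrib]
  apply DV.sum hp
  intro k _
  split_ifs with h
  · rw [zero_sub]
    apply DV.neg
    rw [DV.int_iff hp]
    have : (p : ℤ) ∣ k := by exact_mod_cast h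
    exact (pow_dvd_pow _ he).trans (pow_dvd_pow_of_dvd this e)
  · have h1 : k ^ (e + s) ≡ 1 [MOD p ^ K] := by
      have := Nat.ModEq.pow_totient (n := p ^ K) (x := k)
        (((Nat.Prime.coprime_iff_not_dvd hp).2 h).symm.pow_right K)
      rwa [Nat.totient_prime_pow hp hK, mul_comm, ← hes] at this
    have h2 := (Nat.modEq_iff_dvd.1 h1)
    obtain ⟨u, hu⟩ := h2
    refine ⟨u, (k : ℤ) ^ s, fun hh => ?_, ?_⟩
    · exact h (by exact_mod_cast (Nat.prime_iff_prime_int.1 hp).dvd_of_dvd_pow hh)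
    · have : (k : ℚ) ≠ 0 := by rintro h0; exact h (by simp_all)
      have hu' : (1 : ℚ) - (k : ℚ) ^ (e + s) = (p : ℚ) ^ K * u := by exact_mod_cast hu
      push_cast
      rw [← hu', pow_add]
      field_simp

theorem DV_up (p s n : ℕ) (hp : p.Prime) (hs : 0 < s) (h : DV p 1 (HS s n)) :
    DV p s (HS s (n / p)) := by
  have h0 : DV p 0 (HS s n) := h.mono (by omega)
  rw [HS_rec p s n hp hs] at h0
  have := h0.sub hp (HR_int p s n hp)
  rw [add_sub_cancel_right, ← DV.scale hp] at this
  simpa using this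

theorem finite_of_bound (p s A : ℕ) (hp : p.Prime) (hs : 0 < s) (hA : 1 ≤ A)
    (h : ∀ n, A ≤ n → n < p * A → ¬ DV p s (HS s n)) :
    {n : ℕ | (p : ℤ) ∣ (mhs [s] n).num}.Finite := by
  have key : ∀ n, A ≤ n → ¬ DV p s (HS s n) := by
    intro n
    induction n using Nat.strong_induction_on with
    | _ n ih =>
      intro hn hD
      rcases Nat.lt_or_ge n (p * A) with h1 | h1
      · exact h n hn h1 hD
      · refine ih (n / p) (Nat.div_lt_self (by omega) hp.one_lt) ?_
          (DV_up p s n hp hs (hD.mono hs))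
        rw [Nat.le_div_iff_mul_le hp.pos, mul_comm]; exact h1
  apply (Set.finite_lt_nat (p * A)).subset
  intro n hn
  by_contra hh
  simp only [Set.mem_ofPred_eq, not_lt] at hn hh
  rw [mhs_eq s n hs] at hn
  refine key (n / p) ?_ (DV_up p s n hp hs (DV.of_num hp _ hn))
  rw [Nat.le_div_iff_mul_le hp.pos, mul_comm]; exact hh

theorem DV_top (p s : ℕ) (hp : p = 5 ∨ p = 7) (hs : 3 ≤ s) : ¬ DV p s (HS s (p - 1)) := by
  have hpp : p.Prime := by rcases hp with rfl | rfl <;> norm_num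
  have h5 : 5 ≤ p := by omega
  intro h
  have hbig : 2 * s + 3 ≤ (p - 1) * p ^ (s - 1) := by
    have a : ∀ i, 3 * (i + 2) ≤ 5 ^ (i + 2) := by
      intro i
      induction i with
      | zero => norm_num
      | succ i ih => rw [show i + 1 + 2 = (i + 2) + 1 by ring, pow_succ]; omega
    have a1 := a (s - 3)
    rw [show s - 3 + 2 = s - 1 by omega] at a1
    have a2 := Nat.pow_le_pow_left h5 (s - 1)
    have a3 : 4 * p ^ (s - 1) ≤ (p - 1) * p ^ (s - 1) := Nat.mul_le_mul_right _ (by omega)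
    omega
  obtain ⟨n, hn⟩ : ∃ n, n + 3 + s = (p - 1) * p ^ (s - 1) := ⟨(p - 1) * p ^ (s - 1) - 3 - s, by omega⟩
  refine PS_main p n s hp hs hn ?_
  have h1 := HR_approx p s (p - 1) s (n + 3) hpp (by omega) (by omega) hn
  rw [HS_rec p s (p - 1) hpp (by omega), Nat.div_eq_of_lt (by omega),
    show HS s 0 = 0 by simp [HS]; omega, zero_div, zero_add] at h
  have h2 := h.sub hpp h1
  rw [sub_sub_cancel, DV.int_iff hpp, Nat.sub_add_cancel hpp.one_le] at h2
  exact h2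

theorem not_DV_of (p s m N : ℕ) (A : ℤ) (hp : p.Prime) (hN : HS s m * (N : ℤ) ^ s = A)
    (hA : ¬ (p : ℤ) ^ s ∣ A) : ¬ DV p s (HS s m) := by
  intro h
  have := h.mul_int ((N : ℤ) ^ s)
  push_cast at hN this
  rw [hN, DV.int_iff hp] at this
  exact hA this

theorem HS1 (s : ℕ) (hs : 0 < s) : HS s 1 * ((1 : ℕ) : ℤ) ^ s = (1 : ℤ) := by
  simp [HS, Finset.sum_range_succ, hs.ne']

theorem HS2 (s : ℕ) (hs : 0 < s) : HS s 2 * ((2 : ℕ) : ℤ) ^ s = (2 ^ s + 1 : ℤ) := by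
  simp [HS, Finset.sum_range_succ, hs.ne']
  field_simp

theorem HS3 (s : ℕ) (hs : 0 < s) : HS s 3 * ((6 : ℕ) : ℤ) ^ s = (6 ^ s + 3 ^ s + 2 ^ s : ℤ) := by
  simp [HS, Finset.sum_range_succ, hs.ne']
  have : (6 : ℚ) ^ s = 2 ^ s * 3 ^ s := by rw [← mul_pow]; norm_num
  rw [this]
  field_simp

theorem HS4 (s : ℕ) (hs : 0 < s) :
    HS s 4 * ((12 : ℕ) : ℤ) ^ s = (12 ^ s + 6 ^ s + 4 ^ s + 3 ^ s : ℤ) := by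
  simp [HS, Finset.sum_range_succ, hs.ne']
  have h6 : (6 : ℚ) ^ s = 2 ^ s * 3 ^ s := by rw [← mul_pow]; norm_num
  have h12 : (12 : ℚ) ^ s = 2 ^ s * 2 ^ s * 3 ^ s := by rw [← mul_pow, ← mul_pow]; norm_num
  have h4 : (4 : ℚ) ^ s = 2 ^ s * 2 ^ s := by rw [← mul_pow]; norm_num
  rw [h12, h6, h4]
  field_simp

theorem HS5 (s : ℕ) (hs : 0 < s) :
    HS s 5 * ((60 : ℕ) : ℤ) ^ s = (60 ^ s + 30 ^ s + 20 ^ s + 15 ^ s + 12 ^ s : ℤ) := by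
  simp [HS, Finset.sum_range_succ, hs.ne']
  have h60 : (60 : ℚ) ^ s = 2 ^ s * 2 ^ s * 3 ^ s * 5 ^ s := by simp only [← mul_pow]; norm_num
  have h30 : (30 : ℚ) ^ s = 2 ^ s * 3 ^ s * 5 ^ s := by simp only [← mul_pow]; norm_num
  have h20 : (20 : ℚ) ^ s = 2 ^ s * 2 ^ s * 5 ^ s := by simp only [← mul_pow]; norm_num
  have h15 : (15 : ℚ) ^ s = 3 ^ s * 5 ^ s := by simp only [← mul_pow]; norm_num
  have h12 : (12 : ℚ) ^ s = 2 ^ s * 2 ^ s * 3 ^ s := by rw [← mul_pow, ← mul_pow]; norm_num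
  have h4 : (4 : ℚ) ^ s = 2 ^ s * 2 ^ s := by rw [← mul_pow]; norm_num
  rw [h60, h30, h20, h15, h12, h4]
  field_simp

theorem not_dvd_of_small (p s : ℕ) (A : ℤ) (h0 : 0 < A) (h1 : A < (p : ℤ) ^ s) :
    ¬ (p : ℤ) ^ s ∣ A := fun h => absurd (Int.le_of_dvd h0 h) (not_le.2 h1)

theorem two_lt (s b : ℕ) (hb : 3 ≤ b) (hs : 2 ≤ s) : (2 ^ s + 1 : ℤ) < (b : ℤ) ^ s := by
  have h : 2 ^ s + 1 < 3 ^ s := by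
    induction s, hs using Nat.le_induction with
    | base => norm_num
    | succ n _ ih => rw [pow_succ, pow_succ]; omega
  have := Nat.pow_le_pow_left hb s
  exact_mod_cast lt_of_lt_of_le h this

theorem three_lt (s : ℕ) (hs : 3 ≤ s) : (6 ^ s + 3 ^ s + 2 ^ s : ℤ) < 7 ^ s := by
  have h : 6 ^ s + 3 ^ s + 2 ^ s < 7 ^ s := by
    induction s, hs using Nat.le_induction with
    | base => norm_num
    | succ n _ ih => rw [pow_succ, pow_succ, pow_succ, pow_succ]; omega
  exact_mod_cast h

theorem one_ndvd (p s : ℕ) (hp : p.Prime) (hs : 0 < s) : ¬ (p : ℤ) ^ s ∣ 1 := by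
  apply not_dvd_of_small _ _ _ one_pos
  exact_mod_cast Nat.one_lt_pow hs.ne' hp.one_lt

theorem caseA2 (s : ℕ) (hs : 0 < s) : {n : ℕ | ((2 : ℕ) : ℤ) ∣ (mhs [s] n).num}.Finite := by
  apply finite_of_bound 2 s 1 Nat.prime_two hs le_rfl
  intro n h1 h2
  obtain rfl : n = 1 := by omega
  exact not_DV_of 2 s 1 1 1 Nat.prime_two (by exact_mod_cast HS1 s hs) (one_ndvd 2 s Nat.prime_two hs)

theorem caseA3 (s : ℕ) (hs : 2 ≤ s) : {n : ℕ | ((3 : ℕ) : ℤ) ∣ (mhs [s] n).num}.Finite := by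
  apply finite_of_bound 3 s 1 Nat.prime_three (by omega) le_rfl
  intro n h1 h2
  obtain rfl | rfl : n = 1 ∨ n = 2 := by omega
  · exact not_DV_of 3 s 1 1 1 Nat.prime_three (by exact_mod_cast HS1 s (by omega))
      (one_ndvd 3 s Nat.prime_three (by omega))
  · exact not_DV_of 3 s 2 2 (2 ^ s + 1) Nat.prime_three (by exact_mod_cast HS2 s (by omega))
      (not_dvd_of_small _ _ _ (by positivity) (two_lt s 3 (by norm_num) hs))

theorem caseA5 (s : ℕ) (hs : 2 ≤ s) : {n : ℕ | ((5 : ℕ) : ℤ) ∣ (mhs [s] n).num}.Finite := by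
  apply finite_of_bound 5 s 1 Nat.prime_five (by omega) le_rfl
  intro n h1 h2
  obtain rfl | rfl | rfl | rfl : n = 1 ∨ n = 2 ∨ n = 3 ∨ n = 4 := by omega
  · exact not_DV_of 5 s 1 1 1 Nat.prime_five (by exact_mod_cast HS1 s (by omega))
      (one_ndvd 5 s Nat.prime_five (by omega))
  · exact not_DV_of 5 s 2 2 (2 ^ s + 1) Nat.prime_five (by exact_mod_cast HS2 s (by omega))
      (not_dvd_of_small _ _ _ (by positivity) (two_lt s 5 (by norm_num) hs))
  · refine not_DV_of 5 s 3 6 (6 ^ s + 3 ^ s + 2 ^ s) Nat.prime_five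
      (by exact_mod_cast HS3 s (by omega)) ?_
    intro h
    have h5 : (5 : ℤ) ∣ _ := (dvd_pow_self (5 : ℤ) (by omega : s ≠ 0)).trans h
    obtain ⟨q, r, hr, hq⟩ : ∃ q r : ℕ, r < 4 ∧ s = 4 * q + r :=
      ⟨s / 4, s % 4, Nat.mod_lt _ (by norm_num), (Nat.div_add_mod _ _).symm⟩
    have m2 := mod_pow5 2 (by norm_num) q r
    have m3 := mod_pow5 3 (by norm_num) q r
    have m6 := mod_pow5 6 (by norm_num) q r
    rw [← hq] at m2 m3 m6
    simp only [Int.ModEq] at m2 m3 m6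
    clear h
    interval_cases r <;> simp only [pow_zero, pow_one, Int.reducePow, Int.reduceMod] at m2 m3 m6 <;> omega
  · rcases Nat.lt_or_ge s 3 with h3 | h3
    · obtain rfl : s = 2 := by omega
      exact not_DV_of 5 2 4 12 205 Nat.prime_five
        (by have := HS4 2 (by omega); push_cast at this ⊢; norm_num at this ⊢; exact this) (by norm_num)
    · exact DV_top 5 s (Or.inl rfl) h3

theorem caseA7 (s : ℕ) (hs : 3 ≤ s) : {n : ℕ | ((7 : ℕ) : ℤ) ∣ (mhs [s] n).num}.Finite := by
  have p7 : Nat.Prime 7 := by norm_num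
  apply finite_of_bound 7 s 1 p7 (by omega) le_rfl
  intro n h1 h2
  obtain ⟨q, r, hr, hq⟩ : ∃ q r : ℕ, r < 6 ∧ s = 6 * q + r :=
      ⟨s / 6, s % 6, Nat.mod_lt _ (by norm_num), (Nat.div_add_mod _ _).symm⟩
  obtain rfl | rfl | rfl | rfl | rfl | rfl :
    n = 1 ∨ n = 2 ∨ n = 3 ∨ n = 4 ∨ n = 5 ∨ n = 6 := by omega
  · exact not_DV_of 7 s 1 1 1 p7 (by exact_mod_cast HS1 s (by omega))
      (one_ndvd 7 s p7 (by omega))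
  · exact not_DV_of 7 s 2 2 (2 ^ s + 1) p7 (by exact_mod_cast HS2 s (by omega))
      (not_dvd_of_small _ _ _ (by positivity) (two_lt s 7 (by norm_num) (by omega)))
  · exact not_DV_of 7 s 3 6 (6 ^ s + 3 ^ s + 2 ^ s) p7
      (by exact_mod_cast HS3 s (by omega)) (not_dvd_of_small _ _ _ (by positivity) (three_lt s hs))
  · refine not_DV_of 7 s 4 12 (12 ^ s + 6 ^ s + 4 ^ s + 3 ^ s) p7
      (by exact_mod_cast HS4 s (by omega)) ?_
    intro h
    have h5 : (7 : ℤ) ∣ _ := (dvd_pow_self (7 : ℤ) (by omega : s ≠ 0)).trans h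
    have m2 := mod_pow7 12 (by norm_num) q r
    have m3 := mod_pow7 6 (by norm_num) q r
    have m4 := mod_pow7 4 (by norm_num) q r
    have m6 := mod_pow7 3 (by norm_num) q r
    rw [← hq] at m2 m3 m4 m6
    simp only [Int.ModEq] at m2 m3 m4 m6
    clear h
    interval_cases r <;> norm_num at m2 m3 m4 m6 <;> omega
  · refine not_DV_of 7 s 5 60 (60 ^ s + 30 ^ s + 20 ^ s + 15 ^ s + 12 ^ s) p7
      (by exact_mod_cast HS5 s (by omega)) ?_
    intro h
    have h5 : (7 : ℤ) ∣ _ := (dvd_pow_self (7 : ℤ) (by omega : s ≠ 0)).trans h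
    have m1 := mod_pow7 60 (by norm_num) q r
    have m2 := mod_pow7 30 (by norm_num) q r
    have m3 := mod_pow7 20 (by norm_num) q r
    have m4 := mod_pow7 15 (by norm_num) q r
    have m6 := mod_pow7 12 (by norm_num) q r
    rw [← hq] at m1 m2 m3 m4 m6
    simp only [Int.ModEq] at m1 m2 m3 m4 m6
    clear h
    interval_cases r <;> norm_num at m1 m2 m3 m4 m6 <;> omega
  · exact DV_top 7 s (Or.inr rfl) hs

/-! ### Tree search for the remaining exponents -/

/-- `∑ k^e` over `k` in `[a, a + 2^d)`, `k < N`, modulo `M`, by binary splitting. -/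
def binSum (N e M : ℕ) : ℕ → ℕ → ℕ
  | 0, a => bif Nat.blt a N then a ^ e % M else 0
  | d + 1, a => bif Nat.blt a N then binSum N e M d a + binSum N e M d (a + 2 ^ d) else 0

theorem blt_false {a b : ℕ} (h : ¬ a < b) : Nat.blt a b = false := by
  rw [← Bool.not_eq_true, Nat.blt_eq]; exact h

theorem binSum_spec (N e M d a : ℕ) : binSum N e M d a ≡
    ∑ k ∈ Finset.range (2 ^ d), (if a + k < N then (a + k) ^ e else 0) [MOD M] := by
  induction d generalizing a with
  | zero =>
    simp only [binSum, pow_zero, Finset.sum_range_one, add_zero]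
    by_cases h : a < N
    · have : Nat.blt a N = true := by simpa [Nat.blt_eq] using h
      simp [h, this, Nat.ModEq]
    · have : Nat.blt a N = false := blt_false h
      simp [h, this, Nat.ModEq]
  | succ d ih =>
    simp only [binSum]
    by_cases h : a < N
    · have : Nat.blt a N = true := by simpa [Nat.blt_eq] using h
      rw [this, cond_true, pow_succ, mul_two, Finset.sum_range_add]
      refine (ih a).add ?_
      simpa [add_assoc] using ih (a + 2 ^ d)
    · have : Nat.blt a N = false := blt_false h
      rw [this, cond_false, Finset.sum_eq_zero]
      intro k _
      rw [if_neg (by omega)]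

def sumMod (N e M : ℕ) : ℕ := binSum N e M (Nat.log2 N + 1) 0

theorem sumMod_spec (N e M : ℕ) : sumMod N e M ≡ ∑ k ∈ Finset.range N, k ^ e [MOD M] := by
  refine (binSum_spec _ _ _ _ _).trans ?_
  have hN : N ≤ 2 ^ (Nat.log2 N + 1) := Nat.lt_log2_self.le
  have : ∑ k ∈ Finset.range N, k ^ e
      = ∑ k ∈ Finset.range (2 ^ (Nat.log2 N + 1)), (if 0 + k < N then (0 + k) ^ e else 0) := by
    simp only [zero_add]
    rw [← Finset.sum_filter]
    congr 1
    ext k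
    simp only [Finset.mem_range, Finset.mem_filter]
    omega
  rw [this]

def perSum (N e M : ℕ) : ℕ :=
  (bif Nat.blt N M then 0 else (N / M) * sumMod M e M) + sumMod (N % M) e M

theorem perSum_spec (N e M : ℕ) :
    perSum N e M ≡ ∑ k ∈ Finset.range N, k ^ e [MOD M] := by
  have key : ∀ q t, ∑ k ∈ Finset.range (M * q + t), k ^ e ≡
      q * (∑ k ∈ Finset.range M, k ^ e) + ∑ k ∈ Finset.range t, k ^ e [MOD M] := by
    intro q t
    rw [Finset.sum_range_add]
    refine Nat.ModEq.add ?_ ?_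
    · induction q with
      | zero => simp; rfl
      | succ q ih =>
        rw [Nat.mul_succ, Finset.sum_range_add, add_mul, one_mul]
        refine ih.add ?_
        rw [Nat.ModEq, Finset.sum_nat_mod, Finset.sum_nat_mod (Finset.range M) M (fun k => k ^ e)]
        congr 1
        apply Finset.sum_congr rfl
        intro k _
        exact Nat.ModEq.pow e (by simp [Nat.ModEq])
    · rw [Nat.ModEq, Finset.sum_nat_mod, Finset.sum_nat_mod (Finset.range t) M (fun k => k ^ e)]
      congr 1
      apply Finset.sum_congr rfl
      intro k _
      exact Nat.ModEq.pow e (by simp [Nat.ModEq])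
  have h := key (N / M) (N % M)
  rw [Nat.div_add_mod] at h
  refine Nat.ModEq.trans ?_ h.symm
  unfold perSum
  refine Nat.ModEq.add ?_ (sumMod_spec _ _ _)
  by_cases hN : N < M
  · have : Nat.blt N M = true := by simpa [Nat.blt_eq] using hN
    rw [this, cond_true, Nat.div_eq_of_lt hN, zero_mul]
  · have : Nat.blt N M = false := blt_false hN
    rw [this, cond_false]
    exact (sumMod_spec _ _ _).mul_left _

def child (p s K m a r : ℕ) : ℕ × ℕ :=
  (p * m + r, (a / p ^ s + perSum (p * m + r + 1) ((p - 1) * p ^ (K - 1) - s) (p ^ K)) % p ^ K)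

def stepL (p s K : ℕ) (L : List (ℕ × ℕ)) : List (ℕ × ℕ) :=
  L.flatMap fun x => ((List.range p).map fun r => child p s K x.1 x.2 r).filter
    fun y => Nat.blt 0 y.1 && Nat.beq (y.2 % p ^ (min s K)) 0

def TInv (p s A B K : ℕ) (L : List (ℕ × ℕ)) : Prop :=
  ∀ n, A ≤ n → n < B → DV p s (HS s n) → ∃ a : ℕ, (n, a) ∈ L ∧ DV p K (HS s n - a)

theorem TInv_step (p s A B A' B' K : ℕ) (L L' : List (ℕ × ℕ)) (hp : p.Prime) (hs : 0 < s)
    (hK : 1 ≤ K) (he : K ≤ (p - 1) * p ^ (K - 1) - s)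
    (h : TInv p s A B (K + s) L) (hL : stepL p s K L = L')
    (hA : 1 ≤ A') (hA' : p * A ≤ A') (hB' : B' ≤ p * B) :
    TInv p s A' B' K L' := by
  intro n h1 h2 hD
  have hup := DV_up p s n hp hs (hD.mono hs)
  obtain ⟨a, ha, haD⟩ := h (n / p) (by
    rw [Nat.le_div_iff_mul_le hp.pos, mul_comm]; omega) (by
    rw [Nat.div_lt_iff_lt_mul hp.pos, mul_comm]; omega) hup
  have hpa : p ^ s ∣ a := by
    have := hup.sub hp (haD.mono (by omega : s ≤ K + s))
    rw [sub_sub_cancel, show (a : ℚ) = ((a : ℤ) : ℚ) by simp, DV.int_iff hp] at this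
    exact_mod_cast this
  obtain ⟨c, hc⟩ := hpa
  have hps : 0 < p ^ s := pow_pos hp.pos s
  have hac : a / p ^ s = c := by rw [hc, Nat.mul_div_cancel_left _ hps]
  set e := (p - 1) * p ^ (K - 1) - s with he'
  have hes : e + s = (p - 1) * p ^ (K - 1) := by omega
  set b := (child p s K (n / p) a (n % p)).2 with hb
  have hchild : child p s K (n / p) a (n % p) = (n, b) := by
    rw [hb]; simp [child, Nat.div_add_mod]
  have hbm : b ≡ c + ∑ k ∈ Finset.range (n + 1), k ^ e [MOD p ^ K] := by
    rw [hb]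
    simp only [child]
    rw [Nat.div_add_mod, ← he', hac]
    exact (Nat.mod_modEq _ _).trans ((perSum_spec _ _ _).add_left c)
  have hbD : DV p K (HS s n - b) := by
    have e1 := (DV.scale hp).1 haD
    have e2 := HR_approx p s n K e hp hK he hes
    have e3 : DV p K ((((c + ∑ k ∈ Finset.range (n + 1), k ^ e : ℕ) : ℤ) - (b : ℤ) : ℤ) : ℚ) := by
      rw [DV.int_iff hp]
      have := Nat.modEq_iff_dvd.1 hbm
      exact_mod_cast this
    have e4 := (e1.add hp e2).add hp e3
    rw [HS_rec p s n hp hs]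
    convert e4 using 1
    have : (p : ℚ) ^ s ≠ 0 := by exact_mod_cast hps.ne'
    rw [hc]
    push_cast
    field_simp
    ring
  refine ⟨b, ?_, hbD⟩
  rw [← hL, stepL, List.mem_flatMap]
  refine ⟨(n / p, a), ha, ?_⟩
  rw [List.mem_filter]
  refine ⟨?_, ?_⟩
  · rw [List.mem_map]
    exact ⟨n % p, List.mem_range.2 (Nat.mod_lt _ hp.pos), hchild⟩
  · have d : p ^ (min s K) ∣ b := by
      have := (hD.mono (min_le_left s K)).sub hp (hbD.mono (min_le_right s K))
      rw [sub_sub_cancel, show (b : ℚ) = ((b : ℤ) : ℚ) by simp, DV.int_iff hp] at this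
      exact_mod_cast this
    rw [Bool.and_eq_true]
    refine ⟨?_, ?_⟩
    · simp only [Nat.blt_eq]; omega
    · simp only [Nat.beq_eq]; exact Nat.mod_eq_zero_of_dvd d

theorem TInv_zero (p s K : ℕ) (hp : p.Prime) (hs : 0 < s) : TInv p s 0 1 K [(0, 0)] := by
  intro n _ h2 _
  obtain rfl : n = 0 := by omega
  refine ⟨0, by simp, ?_⟩
  have : HS s 0 = 0 := by simp [HS]; omega
  rw [this]; simpa using DV.zero hp

theorem finite_of_TInv (p s A K : ℕ) (hp : p.Prime) (hs : 0 < s) (hA : 1 ≤ A)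
    (h : TInv p s A (p * A) K []) : {n : ℕ | (p : ℤ) ∣ (mhs [s] n).num}.Finite := by
  apply finite_of_bound p s A hp hs hA
  intro n h1 h2 hD
  obtain ⟨a, ha, _⟩ := h n h1 h2 hD
  simp at ha

theorem case31 : {n : ℕ | ((3 : ℕ) : ℤ) ∣ (mhs [1] n).num}.Finite := by
  have hp : Nat.Prime 3 := by norm_num
  have i0 := TInv_zero 3 1 5 hp one_pos
  have i1 := TInv_step 3 1 _ _ 1 3 4 _ [(2, 42)] hp one_pos (by norm_num) (by norm_num) i0
    (by decide +kernel) (by norm_num) (by norm_num) (by norm_num)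
  have i2 := TInv_step 3 1 _ _ 3 9 3 _ [(7, 24)] hp one_pos (by norm_num) (by norm_num) i1
    (by decide +kernel) (by norm_num) (by norm_num) (by norm_num)
  have i3 := TInv_step 3 1 _ _ 9 27 2 _ [(22, 3)] hp one_pos (by norm_num) (by norm_num) i2
    (by decide +kernel) (by norm_num) (by norm_num) (by norm_num)
  have i4 := TInv_step 3 1 _ _ 27 81 1 _ [] hp one_pos (by norm_num) (by norm_num) i3
    (by decide +kernel) (by norm_num) (by norm_num) (by norm_num)
  exact finite_of_TInv 3 1 27 1 hp one_pos (by norm_num) i4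

theorem case51 : {n : ℕ | ((5 : ℕ) : ℤ) ∣ (mhs [1] n).num}.Finite := by
  have hp : Nat.Prime 5 := by norm_num
  have i0 := TInv_zero 5 1 4 hp one_pos
  have i1 := TInv_step 5 1 _ _ 1 5 3 _ [(4, 75)] hp one_pos (by norm_num) (by norm_num) i0
    (by decide +kernel) (by norm_num) (by norm_num) (by norm_num)
  have i2 := TInv_step 5 1 _ _ 5 25 2 _ [(20, 15), (24, 15)] hp one_pos (by norm_num) (by norm_num) i1
    (by decide +kernel) (by norm_num) (by norm_num) (by norm_num)
  have i3 := TInv_step 5 1 _ _ 25 125 1 _ [] hp one_pos (by norm_num) (by norm_num) i2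
    (by decide +kernel) (by norm_num) (by norm_num) (by norm_num)
  exact finite_of_TInv 5 1 25 1 hp one_pos (by norm_num) i3

theorem case72 : {n : ℕ | ((7 : ℕ) : ℤ) ∣ (mhs [2] n).num}.Finite := by
  have hp : Nat.Prime 7 := by norm_num
  have i0 := TInv_zero 7 2 6 hp two_pos
  have i1 := TInv_step 7 2 _ _ 1 7 4 _ [(3, 735)] hp two_pos (by norm_num) (by norm_num) i0
    (by decide +kernel) (by norm_num) (by norm_num) (by norm_num)
  have i2 := TInv_step 7 2 _ _ 7 49 2 _ [] hp two_pos (by norm_num) (by norm_num) i1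
    (by decide +kernel) (by norm_num) (by norm_num) (by norm_num)
  exact finite_of_TInv 7 2 7 2 hp two_pos (by norm_num) i2

theorem case71 : {n : ℕ | ((7 : ℕ) : ℤ) ∣ (mhs [1] n).num}.Finite := by
  have hp : Nat.Prime 7 := by norm_num
  have i0 := TInv_zero 7 1 8 hp one_pos
  have i1 := TInv_step 7 1 _ _ 1 7 7 _ [(6, 700014)] hp one_pos (by norm_num) (by norm_num) i0
    (by decide +kernel) (by norm_num) (by norm_num) (by norm_num)
  have i2 := TInv_step 7 1 _ _ 7 49 6 _ [(42, 22778), (48, 47180)] hp one_pos (by norm_num)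
    (by norm_num) i1 (by decide +kernel) (by norm_num) (by norm_num) (by norm_num)
  have i3 := TInv_step 7 1 _ _ 49 343 5 _ [(295, 2961), (299, 7672), (337, 3318), (341, 7084)]
    hp one_pos (by norm_num) (by norm_num) i2
    (by decide +kernel) (by norm_num) (by norm_num) (by norm_num)
  have i4 := TInv_step 7 1 _ _ 343 2401 4 _ [(2096, 812), (2390, 728)] hp one_pos (by norm_num)
    (by norm_num) i3 (by decide +kernel) (by norm_num) (by norm_num) (by norm_num)
  have i5 := TInv_step 7 1 _ _ 2401 16807 3 _ [(14675, 175), (16731, 182), (16735, 35)] hp one_pos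
    (by norm_num) (by norm_num) i4 (by decide +kernel) (by norm_num) (by norm_num) (by norm_num)
  have i6 := TInv_step 7 1 _ _ 16807 117649 2 _ [(102728, 35)] hp one_pos (by norm_num)
    (by norm_num) i5 (by decide +kernel) (by norm_num) (by norm_num) (by norm_num)
  have i7 := TInv_step 7 1 _ _ 117649 823543 1 _ [] hp one_pos (by norm_num) (by norm_num) i6
    (by decide +kernel) (by norm_num) (by norm_num) (by norm_num)
  exact finite_of_TInv 7 1 117649 1 hp one_pos (by norm_num) i7

/-- For `p ∈ {2,3,5,7}` the `p`-divisible set `J(s|p)` of the harmonic-like series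
`H(s;·)` is finite. -/
theorem stmt11 (s p : ℕ) (hs : 0 < s) (hp : p = 2 ∨ p = 3 ∨ p = 5 ∨ p = 7) :
    {n : ℕ | (p : ℤ) ∣ (mhs [s] n).num}.Finite := by
  rcases hp with rfl | rfl | rfl | rfl
  · exact caseA2 s hs
  · rcases Nat.lt_or_ge s 2 with h | h
    · obtain rfl : s = 1 := by omega
      exact case31
    · exact caseA3 s h
  · rcases Nat.lt_or_ge s 2 with h | h
    · obtain rfl : s = 1 := by omega
      exact case51
    · exact caseA5 s h
  · rcases Nat.lt_or_ge s 3 with h | h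
    · obtain rfl | rfl : s = 1 ∨ s = 2 := by omega
      · exact case71
      · exact case72
    · exact caseA7 s h
end

section
/- Let p be an odd prime, s a positive integer, and r an integer with 1 ≤ r ≤ p-2. Then p divides the numerator of H(s;r) if and only if p divides the numerator of H(s;p-1-r); that is, v_p(H(s;r)) ≥ 1 if and only if v_p(H(s;p-1-r)) ≥ 1. -/
lemma mhs_single (s n : ℕ) :
    mhs [s] n = ∑ k ∈ Finset.range n, 1 / (((k + 1 : ℕ) : ℚ) ^ s) := by
  unfold mhs
  symm
  refine Finset.sum_bij' (fun k _ => fun _ => Fin.ofNat (n + 1) (k + 1))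
    (fun f _ => (f ⟨0, by simp⟩ : ℕ) - 1) ?_ ?_ ?_ ?_ ?_
  · intro k hk
    have hk' : k < n := Finset.mem_range.1 hk
    simp only [Finset.mem_filter, Finset.mem_univ, true_and]
    refine ⟨?_, ?_⟩
    · rintro ⟨i, hi⟩ ⟨j, hj⟩ hij
      simp only [List.length_singleton, Fin.mk_lt_mk] at hi hj hij
      omega
    · intro i
      rw [Fin.val_ofNat, Nat.mod_eq_of_lt (by omega)]
      omega
  · intro f hf
    simp only [Finset.mem_filter, Finset.mem_univ, true_and] at hf
    have := hf.2 ⟨0, by simp⟩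
    have := (f ⟨0, by simp⟩).isLt
    simp only [Finset.mem_range]
    omega
  · intro k hk
    have hk' : k < n := Finset.mem_range.1 hk
    simp only [Fin.val_ofNat]
    rw [Nat.mod_eq_of_lt (by omega)]
    omega
  · intro f hf
    simp only [Finset.mem_filter, Finset.mem_univ, true_and] at hf
    funext i
    obtain ⟨i, hi⟩ := i
    have hi0 : i = 0 := by simp only [List.length_singleton] at hi; omega
    subst hi0
    have h1 := hf.2 ⟨0, by simp⟩
    have h2 := (f ⟨0, by simp⟩).isLt
    apply Fin.ext
    simp only [Fin.val_ofNat]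
    rw [Nat.mod_eq_of_lt (by omega)]
    omega
  · intro k hk
    have hk' : k < n := Finset.mem_range.1 hk
    simp only [Fin.val_ofNat]
    rw [Nat.mod_eq_of_lt (by omega)]
    simp

lemma cast_sum (p s n : ℕ) [Fact p.Prime] (hn : n < p) :
    (((∑ k ∈ Finset.range n, 1 / (((k + 1 : ℕ) : ℚ) ^ s)).den : ℕ) : ZMod p) ≠ 0 ∧
    ((∑ k ∈ Finset.range n, 1 / (((k + 1 : ℕ) : ℚ) ^ s) : ℚ) : ZMod p)
      = ∑ k ∈ Finset.range n, (((k + 1 : ℕ) : ZMod p) ^ s)⁻¹ := by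
  induction n with
  | zero => simp
  | succ n ih =>
    obtain ⟨h1, h2⟩ := ih (by omega)
    have hne : ((n + 1 : ℕ) : ZMod p) ≠ 0 := by
      rw [Ne, ZMod.natCast_eq_zero_iff]
      intro h
      exact absurd (Nat.le_of_dvd (by omega) h) (by omega)
    have hq : (1 / (((n + 1 : ℕ) : ℚ) ^ s)) = (((n + 1) ^ s : ℕ) : ℚ)⁻¹ := by
      push_cast; rw [one_div]
    have hd : (1 / (((n + 1 : ℕ) : ℚ) ^ s)).den = (n + 1) ^ s := by
      rw [hq, Rat.inv_natCast_den_of_pos (by positivity)]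
    have hd0 : ((1 / (((n + 1 : ℕ) : ℚ) ^ s)).den : ZMod p) ≠ 0 := by
      rw [hd]; push_cast; exact_mod_cast pow_ne_zero s hne
    have hc : ((1 / (((n + 1 : ℕ) : ℚ) ^ s) : ℚ) : ZMod p) = (((n + 1 : ℕ) : ZMod p) ^ s)⁻¹ := by
      rw [hq, Rat.cast_inv_nat]; push_cast; rfl
    rw [Finset.sum_range_succ, Finset.sum_range_succ]
    refine ⟨?_, ?_⟩
    · intro h0
      rw [ZMod.natCast_eq_zero_iff] at h0
      have := h0.trans (Rat.add_den_dvd _ _)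
      rw [← ZMod.natCast_eq_zero_iff] at this
      push_cast at this
      rcases mul_eq_zero.1 this with h | h
      · exact h1 (by push_cast; exact h)
      · exact hd0 (by push_cast; exact h)
    · rw [Rat.cast_add_of_ne_zero h1 hd0, h2, hc]

lemma num_dvd_iff (p s n : ℕ) [Fact p.Prime] (hn : n < p) :
    (p : ℤ) ∣ (mhs [s] n).num ↔
      ∑ k ∈ Finset.range n, (((k + 1 : ℕ) : ZMod p) ^ s)⁻¹ = 0 := by
  obtain ⟨h1, h2⟩ := cast_sum p s n hn
  rw [mhs_single, ← h2, Rat.cast_def, div_eq_zero_iff, or_iff_left h1,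
    ZMod.intCast_zmod_eq_zero_iff_dvd]

lemma full_sum (p s : ℕ) [Fact p.Prime] (hs : 0 < s) (hd : ¬ (p - 1) ∣ s) :
    ∑ k ∈ Finset.range (p - 1), (((k + 1 : ℕ) : ZMod p) ^ s)⁻¹ = 0 := by
  have hp : p.Prime := Fact.out
  have hz : ((0 : ZMod p) ^ s)⁻¹ = 0 := by simp [hs.ne']
  have e1 : ∑ k ∈ Finset.range (p - 1), (((k + 1 : ℕ) : ZMod p) ^ s)⁻¹
      = ∑ k ∈ Finset.range p, ((k : ZMod p) ^ s)⁻¹ := by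
    obtain ⟨m, rfl⟩ : ∃ m, p = m + 1 := ⟨p - 1, by have := hp.two_le; omega⟩
    rw [Finset.sum_range_succ', Nat.cast_zero, hz, add_zero]
    rfl
  have e2 : ∑ k ∈ Finset.range p, ((k : ZMod p) ^ s)⁻¹ = ∑ x : ZMod p, (x ^ s)⁻¹ := by
    refine Finset.sum_bij' (fun k _ => (k : ZMod p)) (fun x _ => x.val) ?_ ?_ ?_ ?_ ?_
    · simp
    · intro x _; exact Finset.mem_range.2 (ZMod.val_lt x)
    · intro k hk; exact ZMod.val_cast_of_lt (Finset.mem_range.1 hk)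
    · intro x _; simp
    · simp
  have e3 : ∑ x : ZMod p, (x ^ s)⁻¹ = ∑ x : ZMod p, x ^ s := by
    refine Fintype.sum_equiv (Equiv.inv (ZMod p)) _ _ ?_
    intro x; simp
  have e4 : ∑ x : ZMod p, x ^ s = ∑ x : (ZMod p)ˣ, (x : ZMod p) ^ s := by
    symm
    refine Finset.sum_of_injOn (fun x => (x : ZMod p)) ?_ ?_ ?_ ?_
    · intro a _ b _ h; exact Units.ext h
    · intro a _; simp
    · intro x _ hx
      have : x = 0 := by
        by_contra h
        exact hx ⟨Units.mk0 x h, by simp, rfl⟩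
      simp [this, hs.ne']
    · intro x _; simp
  rw [e1, e2, e3, e4, FiniteField.sum_pow_units, ZMod.card, if_neg hd]

theorem stmt16 (p s r : ℕ) (hp : p.Prime) (hodd : Odd p) (hs : 0 < s)
    (hr1 : 1 ≤ r) (hr2 : r ≤ p - 2) :
    (p : ℤ) ∣ (mhs [s] r).num ↔ (p : ℤ) ∣ (mhs [s] (p - 1 - r)).num := by
  have : Fact p.Prime := ⟨hp⟩
  have h2 := hp.two_le
  rw [num_dvd_iff p s r (by omega), num_dvd_iff p s (p - 1 - r) (by omega)]
  have hne : ∀ k, 1 ≤ k → k < p → ((k : ℕ) : ZMod p) ≠ 0 := by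
    intro k h1 h2
    rw [Ne, ZMod.natCast_eq_zero_iff]
    intro h
    exact absurd (Nat.le_of_dvd (by omega) h) (by omega)
  by_cases hd : (p - 1) ∣ s
  · have key : ∀ n, 1 ≤ n → n < p →
        ¬ ∑ k ∈ Finset.range n, (((k + 1 : ℕ) : ZMod p) ^ s)⁻¹ = 0 := by
      intro n h1 h2
      have : ∑ k ∈ Finset.range n, (((k + 1 : ℕ) : ZMod p) ^ s)⁻¹ = (n : ZMod p) := by
        rw [Finset.sum_congr rfl (g := fun _ => (1 : ZMod p))]
        · simp
        · intro k hk
          have hk' := Finset.mem_range.1 hk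
          obtain ⟨c, rfl⟩ := hd
          rw [pow_mul, ZMod.pow_card_sub_one_eq_one (hne _ (by omega) (by omega))]
          simp
      rw [this]
      exact hne n h1 h2
    exact iff_of_false (key r hr1 (by omega)) (key _ (by omega) (by omega))
  · have hf := full_sum p s hs hd
    have hsplit : p - 1 = r + (p - 1 - r) := by omega
    rw [hsplit, Finset.sum_range_add,
      ← Finset.sum_range_reflect (fun x => (((r + x + 1 : ℕ) : ZMod p) ^ s)⁻¹)] at hf
    have hre : ∑ j ∈ Finset.range (p - 1 - r),
        (((r + (p - 1 - r - 1 - j) + 1 : ℕ) : ZMod p) ^ s)⁻¹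
        = (-1) ^ s * ∑ k ∈ Finset.range (p - 1 - r), (((k + 1 : ℕ) : ZMod p) ^ s)⁻¹ := by
      rw [Finset.mul_sum]
      refine Finset.sum_congr rfl ?_
      intro j hj
      have hj' := Finset.mem_range.1 hj
      have : ((r + (p - 1 - r - 1 - j) + 1 : ℕ) : ZMod p) = - ((j + 1 : ℕ) : ZMod p) := by
        rw [eq_neg_iff_add_eq_zero, ← Nat.cast_add]
        have : r + (p - 1 - r - 1 - j) + 1 + (j + 1) = p := by omega
        rw [this]; simp
      rw [this, neg_pow, mul_inv]
      congr 1
      rw [← inv_pow, inv_neg, inv_one]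
    rw [hre] at hf
    have hu : ((-1 : ZMod p)) ^ s ≠ 0 := pow_ne_zero _ (neg_ne_zero.2 one_ne_zero)
    constructor
    · intro h
      rw [h, zero_add] at hf
      exact (mul_eq_zero.1 hf).resolve_left hu
    · intro h
      rw [h, mul_zero, add_zero] at hf
      exact hf
end
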